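/- arXiv:math/0005147 — 3 statements merged into one kernel-verified Lean document; each statement's English description precedes it below -/
import Mathlib

section
/- Let f be Hölder continuous with exponent β and g Hölder continuous with exponent γ on the real line, with β + γ > 1. Then for all t > 0 the Stieltjes integral ∫₀ᵗ f dg exists, i.e. the Riemann–Stieltjes sums over partitions converge as the mesh tends to 0. -/
open Set Finset

/-- Left-endpoint Riemann–Stieltjes sum of `f` against `g` for the tagged
partition given by the points `t 0 ≤ t 1 ≤ ⋯ ≤ t n`. -/
noncomputable def RSsum (f g : ℝ → ℝ) (n : ℕ) (t : Fin (n + 1) → ℝ) : ℝ :=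
  ∑ i : Fin n, f (t i.castSucc) * (g (t i.succ) - g (t i.castSucc))

/-- `I` is the Riemann–Stieltjes integral `∫_a^b f dg`: the Riemann–Stieltjes
sums over partitions of `[a,b]` converge to `I` as the mesh tends to `0`. -/
def IsRSIntegral (f g : ℝ → ℝ) (a b I : ℝ) : Prop :=
  ∀ ε > 0, ∃ δ > 0, ∀ (n : ℕ) (t : Fin (n + 1) → ℝ),
    Monotone t → t 0 = a → t (Fin.last n) = b →
    (∀ i : Fin n, t i.succ - t i.castSucc < δ) →
    |RSsum f g n t - I| < ε

open Filter Topology in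
lemma holder_cont (f : ℝ → ℝ) (β C : ℝ) (hβ : 0 < β)
    (hf : ∀ x y : ℝ, |f x - f y| ≤ C * |x - y| ^ β) : Continuous f := by
  rw [continuous_iff_continuousAt]
  intro y
  rw [ContinuousAt, tendsto_iff_dist_tendsto_zero]
  have h : Tendsto (fun x : ℝ => C * |x - y| ^ β) (𝓝 y) (𝓝 0) := by
    have : Continuous (fun x : ℝ => C * |x - y| ^ β) :=
      continuous_const.mul ((continuous_abs.comp (continuous_id.sub continuous_const)).rpow_const
        (fun _ => Or.inr hβ.le))
    have h2 := this.tendsto y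
    simpa [Real.zero_rpow hβ.ne'] using h2
  refine squeeze_zero (fun _ => dist_nonneg) (fun x => ?_) h
  rw [Real.dist_eq]; exact hf x y

lemma core_bound (f h : ℝ → ℝ) (β γ Cf Cg ε K : ℝ) (hβ : 0 < β) (hγ : 0 < γ) (hγ1 : γ ≤ 1)
    (hCf : 0 < Cf) (hCg : 0 < Cg) (hε : 0 < ε)
    (hf : ∀ x y : ℝ, |f x - f y| ≤ Cf * |x - y| ^ β)
    (hh : Continuous h) (hhb : ∀ x, |h x| ≤ Cg * ε ^ (γ - 1))
    (hH : ∀ a b, a ≤ b → |∫ x in a..b, h x| ≤ Cg * (b - a) ^ γ)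
    (hK1 : Cf * Cg ≤ K) (hK2 : 2 * K + Cf * Cg ≤ K * 2 ^ (β + γ)) (n : ℕ) :
    ∀ a b : ℝ, a ≤ b → b - a ≤ 2 ^ n * ε →
      |(∫ x in a..b, f x * h x) - f a * ∫ x in a..b, h x| ≤ K * (b - a) ^ (β + γ) := by
  have hfc := holder_cont f β Cf hβ hf
  have hi : ∀ a b, IntervalIntegrable (fun x => f x * h x) MeasureTheory.volume a b :=
    fun a b => (hfc.mul hh).intervalIntegrable a b
  have hi' : ∀ a b, IntervalIntegrable h MeasureTheory.volume a b :=
    fun a b => hh.intervalIntegrable a b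
  induction n with
  | zero =>
    intro a b hab hL
    rw [pow_zero, one_mul] at hL
    rcases hab.eq_or_lt with rfl | hlt
    · simp [Real.zero_rpow (show β + γ ≠ 0 by linarith)]
    have hL0 : 0 < b - a := by linarith
    rw [← intervalIntegral.integral_const_mul, ← intervalIntegral.integral_sub (hi a b)
      ((hi' a b).const_mul _)]
    have h1 : ‖∫ x in a..b, (f x * h x - f a * h x)‖
        ≤ (Cf * (b - a) ^ β * (Cg * ε ^ (γ - 1))) * |b - a| := by
      apply intervalIntegral.norm_integral_le_of_norm_le_const
      intro x hx
      rw [Set.uIoc_of_le hab] at hx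
      rw [← sub_mul, norm_mul, Real.norm_eq_abs, Real.norm_eq_abs]
      refine mul_le_mul ((hf x a).trans ?_) (hhb x) (abs_nonneg _) (by positivity)
      rw [abs_of_pos (by linarith [hx.1])]
      have := hx.2
      have := hx.1
      gcongr
    rw [Real.norm_eq_abs, abs_of_pos hL0] at h1
    refine h1.trans ?_
    have h2 : ε ^ (γ - 1) ≤ (b - a) ^ (γ - 1) :=
      Real.rpow_le_rpow_of_nonpos hL0 hL (by linarith)
    calc _ ≤ Cf * (b - a) ^ β * (Cg * (b - a) ^ (γ - 1)) * (b - a) := by gcongr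
      _ = Cf * Cg * (b - a) ^ (β + γ) := by
        have : (b - a) ^ (β + γ) = (b - a) ^ β * (b - a) ^ (γ - 1) * (b - a) := by
          rw [← Real.rpow_add hL0, ← Real.rpow_add_one hL0.ne']; ring_nf
        rw [this]; ring
      _ ≤ _ := by gcongr
  | succ n ih =>
    intro a b hab hL
    set m := (a + b) / 2 with hm
    have hp : (b - a) ^ (β + γ) = 2 ^ (β + γ) * ((b - a) / 2) ^ (β + γ) := by
      rw [← Real.mul_rpow (by norm_num) (by linarith)]; congr 1; ring
    have h1 := ih a m (by linarith) (by rw [pow_succ] at hL; linarith)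
    have h2 := ih m b (by linarith) (by rw [pow_succ] at hL; linarith)
    have h3 := hH m b (by linarith)
    have h4 := hf m a
    rw [abs_of_nonneg (show 0 ≤ m - a by linarith)] at h4
    rw [show m - a = (b - a) / 2 by rw [hm]; ring] at h1 h4
    rw [show b - m = (b - a) / 2 by rw [hm]; ring] at h2 h3
    rw [← intervalIntegral.integral_add_adjacent_intervals (hi a m) (hi m b),
      ← intervalIntegral.integral_add_adjacent_intervals (hi' a m) (hi' m b)]
    have hl : 0 ≤ (b - a) / 2 := by linarith
    have h5 : |(f m - f a) * ∫ x in m..b, h x| ≤ Cf * Cg * ((b - a) / 2) ^ (β + γ) := by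
      rw [abs_mul, Real.rpow_add_of_nonneg hl hβ.le hγ.le]
      calc _ ≤ (Cf * ((b - a) / 2) ^ β) * (Cg * ((b - a) / 2) ^ γ) := by gcongr
        _ = _ := by ring
    have h6 : (2 * K + Cf * Cg) * ((b - a) / 2) ^ (β + γ)
        ≤ K * 2 ^ (β + γ) * ((b - a) / 2) ^ (β + γ) := by gcongr
    rw [hp]
    rw [abs_le] at *
    constructor <;> nlinarith [h1.1, h1.2, h2.1, h2.2, h5.1, h5.2]

lemma G_id (g : ℝ → ℝ) (hg : Continuous g) (ε a b : ℝ) :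
    ∫ x in a..b, (g (x + ε) - g x) / ε = (∫ s in (0:ℝ)..ε, (g (b + s) - g (a + s))) / ε := by
  have hi : ∀ a b, IntervalIntegrable g MeasureTheory.volume a b :=
    fun a b => hg.intervalIntegrable a b
  rw [intervalIntegral.integral_div]
  congr 1
  have hr : ∀ c a b, IntervalIntegrable (fun x => g (x + c)) MeasureTheory.volume a b :=
    fun c a b => Continuous.intervalIntegrable (by fun_prop) a b
  have hl : ∀ c a b, IntervalIntegrable (fun x => g (c + x)) MeasureTheory.volume a b :=
    fun c a b => Continuous.intervalIntegrable (by fun_prop) a b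
  rw [intervalIntegral.integral_sub (hr _ _ _) (hi _ _),
    intervalIntegral.integral_sub (hl _ _ _) (hl _ _ _)]
  rw [intervalIntegral.integral_comp_add_right, intervalIntegral.integral_comp_add_left,
    intervalIntegral.integral_comp_add_left]
  have e1 := intervalIntegral.integral_add_adjacent_intervals (hi a b) (hi b (b + ε))
  have e2 := intervalIntegral.integral_add_adjacent_intervals (hi a (a + ε)) (hi (a + ε) (b + ε))
  simp only [add_zero]
  linarith

lemma G_bound (g : ℝ → ℝ) (γ Cg ε : ℝ) (hγ : 0 < γ) (hε : 0 < ε)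
    (hg : ∀ x y : ℝ, |g x - g y| ≤ Cg * |x - y| ^ γ) (a b : ℝ) (hab : a ≤ b) :
    |∫ x in a..b, (g (x + ε) - g x) / ε| ≤ Cg * (b - a) ^ γ := by
  rw [G_id g (holder_cont g γ Cg hγ hg), abs_div, abs_of_pos hε, div_le_iff₀ hε]
  have := intervalIntegral.norm_integral_le_of_norm_le_const (a := 0) (b := ε)
    (f := fun s => g (b + s) - g (a + s)) (C := Cg * (b - a) ^ γ) (by
      intro s _
      have := hg (b + s) (a + s)
      rwa [show b + s - (a + s) = b - a by ring, abs_of_nonneg (show 0 ≤ b - a by linarith)] at this)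
  rwa [sub_zero, abs_of_pos hε] at this

open Filter Topology in
lemma G_tendsto (g : ℝ → ℝ) (hg : Continuous g) (a b : ℝ) :
    Tendsto (fun ε : ℝ => ∫ x in a..b, (g (x + ε) - g x) / ε) (𝓝[>] 0) (𝓝 (g b - g a)) := by
  simp_rw [G_id g hg]
  have hc : Continuous (fun s => g (b + s) - g (a + s)) := by fun_prop
  have h := (hc.integral_hasStrictDerivAt 0 0).hasDerivAt.tendsto_slope
  have h2 := h.mono_left (nhdsWithin_mono (0:ℝ) (show Set.Ioi (0:ℝ) ⊆ {0}ᶜ from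
    fun x hx => ne_of_gt hx))
  simp only [add_zero] at h2
  refine h2.congr (fun x => ?_)
  simp [slope_def_field]

open Filter Topology in
lemma exists_J (f g : ℝ → ℝ) (β γ Cf Cg : ℝ)
    (hβ : 0 < β) (hγ : 0 < γ) (hγ1 : γ ≤ 1)
    (hCf : 0 < Cf) (hCg : 0 < Cg)
    (hf : ∀ x y : ℝ, |f x - f y| ≤ Cf * |x - y| ^ β)
    (hg : ∀ x y : ℝ, |g x - g y| ≤ Cg * |x - y| ^ γ)
    (hβγ : 1 < β + γ) :
    ∃ K > 0, ∃ J : ℝ → ℝ, ∀ a b, 0 ≤ a → a ≤ b →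
      |f a * (g b - g a) - (J b - J a)| ≤ K * (b - a) ^ (β + γ) := by
  have h2 : (2:ℝ) < 2 ^ (β + γ) := by
    simpa using Real.rpow_lt_rpow_of_exponent_lt (x := 2) (by norm_num) hβγ
  have hd : 0 < (2:ℝ) ^ (β + γ) - 2 := by linarith
  set K := Cf * Cg + Cf * Cg / (2 ^ (β + γ) - 2) with hK
  have hC : 0 < Cf * Cg := by positivity
  have hK0 : 0 < K := by positivity
  have hK1 : Cf * Cg ≤ K := by rw [hK]; linarith [div_pos hC hd]
  have hK2 : 2 * K + Cf * Cg ≤ K * 2 ^ (β + γ) := by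
    have : K * (2 ^ (β + γ) - 2) = Cf * Cg * (2 ^ (β + γ) - 2) + Cf * Cg := by
      rw [hK]; field_simp
    nlinarith [mul_pos hC hd]
  have hfc := holder_cont f β Cf hβ hf
  have hgc := holder_cont g γ Cg hγ hg
  have hhc : ∀ ε : ℝ, Continuous (fun x => (g (x + ε) - g x) / ε) := by
    intro ε; fun_prop
  have key : ∀ ε > 0, ∀ a b : ℝ, a ≤ b →
      |(∫ x in a..b, f x * ((g (x + ε) - g x) / ε)) - f a * ∫ x in a..b, (g (x + ε) - g x) / ε|
        ≤ K * (b - a) ^ (β + γ) := by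
    intro ε hε a b hab
    obtain ⟨n, hn⟩ := pow_unbounded_of_one_lt ((b - a) / ε) (one_lt_two)
    refine core_bound f _ β γ Cf Cg ε K hβ hγ hγ1 hCf hCg hε hf (hhc ε) ?_
      (G_bound g γ Cg ε hγ hε hg) hK1 hK2 n a b hab ?_
    · intro x
      have := hg (x + ε) x
      rw [add_sub_cancel_left, abs_of_pos hε] at this
      rw [abs_div, abs_of_pos hε, div_le_iff₀ hε, mul_assoc, ← Real.rpow_add_one hε.ne',
        sub_add_cancel]
      exact this
    · exact ((div_lt_iff₀ hε).1 hn).le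
  let U : Ultrafilter ℝ := Ultrafilter.of (𝓝[>] (0:ℝ))
  have hU : (U : Filter ℝ) ≤ 𝓝[>] (0:ℝ) := Ultrafilter.of_le _
  have hpos : ∀ᶠ ε in (U : Filter ℝ), (0:ℝ) < ε := hU self_mem_nhdsWithin
  have hlim : ∀ x : ℝ, ∃ L : ℝ, 0 ≤ x →
      Tendsto (fun ε : ℝ => ∫ y in (0:ℝ)..x, f y * ((g (y + ε) - g y) / ε)) U (𝓝 L) := by
    intro x
    by_cases hx : 0 ≤ x
    · set M := K * x ^ (β + γ) + |f 0| * (Cg * x ^ γ)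
      have hmem : ∀ᶠ ε in (U : Filter ℝ),
          (∫ y in (0:ℝ)..x, f y * ((g (y + ε) - g y) / ε)) ∈ Set.Icc (-M) M := by
        filter_upwards [hpos] with ε hε
        have h1 := key ε hε 0 x hx
        have h3 := G_bound g γ Cg ε hγ hε hg 0 x hx
        rw [sub_zero] at h1 h3
        have h4 : |f 0 * ∫ y in (0:ℝ)..x, (g (y + ε) - g y) / ε| ≤ |f 0| * (Cg * x ^ γ) := by
          rw [abs_mul]; gcongr
        rw [abs_le] at h1 h4
        constructor <;> simp only [M] <;> linarith [h1.1, h1.2, h4.1, h4.2]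
      obtain ⟨L, -, hL⟩ := (isCompact_Icc (a := -M) (b := M)).ultrafilter_le_nhds
        (U.map (fun ε : ℝ => ∫ y in (0:ℝ)..x, f y * ((g (y + ε) - g y) / ε)))
        (le_principal_iff.2 hmem)
      exact ⟨L, fun _ => hL⟩
    · exact ⟨0, fun h => absurd h hx⟩
  choose J hJ using hlim
  refine ⟨K, hK0, J, fun a b ha hab => ?_⟩
  have t1 := (hJ b (ha.trans hab)).sub (hJ a ha)
  have t2 := ((G_tendsto g hgc a b).mono_left hU).const_mul (f a)
  refine le_of_tendsto (t2.sub t1).abs ?_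
  filter_upwards [hpos] with ε hε
  have hi : ∀ a b, IntervalIntegrable (fun x => f x * ((g (x + ε) - g x) / ε))
      MeasureTheory.volume a b := fun a b => (hfc.mul (hhc ε)).intervalIntegrable a b
  rw [intervalIntegral.integral_interval_sub_left (hi _ _) (hi _ _), abs_sub_comm]
  exact key ε hε a b hab

lemma fin_tele (n : ℕ) (u : Fin (n + 1) → ℝ) :
    ∑ i : Fin n, (u i.succ - u i.castSucc) = u (Fin.last n) - u 0 := by
  have h1 := Fin.sum_univ_succ u
  have h2 := Fin.sum_univ_castSucc u
  rw [Finset.sum_sub_distrib]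
  linarith

/-- Young–Kondurar theorem: if `f` is `β`-Hölder and `g` is `γ`-Hölder with
`β + γ > 1`, then the Stieltjes integral `∫₀ᵗ f dg` exists for every `t > 0`. -/
theorem stieltjes_integral_exists_of_holder
    (f g : ℝ → ℝ) (β γ Cf Cg : ℝ)
    (hβ : 0 < β) (hβ1 : β ≤ 1) (hγ : 0 < γ) (hγ1 : γ ≤ 1)
    (hCf : 0 < Cf) (hCg : 0 < Cg)
    (hf : ∀ x y : ℝ, |f x - f y| ≤ Cf * |x - y| ^ β)
    (hg : ∀ x y : ℝ, |g x - g y| ≤ Cg * |x - y| ^ γ)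
    (hβγ : 1 < β + γ) :
    ∀ t : ℝ, 0 < t → ∃ I : ℝ, IsRSIntegral f g 0 t I := by
  intro T hT
  obtain ⟨K, hK, J, hJ⟩ := exists_J f g β γ Cf Cg hβ hγ hγ1 hCf hCg hf hg hβγ
  refine ⟨J T - J 0, fun ε hε => ?_⟩
  set p := β + γ - 1 with hp
  have hp0 : 0 < p := by linarith
  have hq : 0 < ε / (2 * K * T) := by positivity
  refine ⟨(ε / (2 * K * T)) ^ p⁻¹, by positivity, ?_⟩
  intro n t hmono h0 hlast hmesh
  have htele := fin_tele n (fun i => J (t i))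
  have htele2 := fin_tele n t
  simp only [h0, hlast] at htele htele2
  rw [← htele, RSsum, ← Finset.sum_sub_distrib]
  have hterm : ∀ i : Fin n, |f (t i.castSucc) * (g (t i.succ) - g (t i.castSucc))
      - (J (t i.succ) - J (t i.castSucc))| ≤ K * (ε / (2 * K * T)) * (t i.succ - t i.castSucc) := by
    intro i
    have hle : t i.castSucc ≤ t i.succ := hmono (Fin.castSucc_lt_succ).le
    have h0' : 0 ≤ t i.castSucc := by rw [← h0]; exact hmono (Fin.zero_le _)
    refine (hJ _ _ h0' hle).trans ?_
    have hd : 0 ≤ t i.succ - t i.castSucc := by linarith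
    have e : (t i.succ - t i.castSucc) ^ (β + γ)
        = (t i.succ - t i.castSucc) ^ p * (t i.succ - t i.castSucc) := by
      rw [show β + γ = p + 1 by rw [hp]; ring, Real.rpow_add_of_nonneg hd hp0.le zero_le_one,
        Real.rpow_one]
    have hb : (t i.succ - t i.castSucc) ^ p ≤ ε / (2 * K * T) := by
      have := Real.rpow_le_rpow hd (hmesh i).le hp0.le
      rwa [Real.rpow_inv_rpow hq.le hp0.ne'] at this
    rw [e, mul_assoc]
    gcongr
  calc _ ≤ ∑ i : Fin n, |f (t i.castSucc) * (g (t i.succ) - g (t i.castSucc))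
      - (J (t i.succ) - J (t i.castSucc))| := Finset.abs_sum_le_sum_abs _ _
    _ ≤ ∑ i : Fin n, K * (ε / (2 * K * T)) * (t i.succ - t i.castSucc) :=
      Finset.sum_le_sum (fun i _ => hterm i)
    _ = ε / 2 := by
      rw [← Finset.mul_sum, htele2]; field_simp; ring
    _ < ε := by linarith
end

section
/- Let b, σ : [0,∞) × ℝ → ℝ with b globally Lipschitz in (t,x), σ continuously differentiable with σ, ∂σ/∂t, ∂σ/∂x globally Lipschitz in (t,x). Let g ∈ C^γ(ℝ) with 1/2 < γ ≤ 1. Then for every T > 0 and every β with 1 − γ < β < γ, the equation x(t) = x₀ + ∫₀ᵗ b(τ, x(τ)) dτ + ∫₀ᵗ σ(τ, x(τ)) dg(τ) has a unique solution x ∈ C^β([0,T]), where the second integral is a Young–Stieltjes integral. -/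
open Set Finset intervalIntegral

/-- `x` solves `x(t) = x₀ + ∫₀ᵗ b(τ,x(τ)) dτ + ∫₀ᵗ σ(τ,x(τ)) dg(τ)` on `[0,T]`,
belonging to `C^β([0,T])`. -/
def IsSolution (b σ : ℝ → ℝ → ℝ) (g : ℝ → ℝ) (x₀ T β : ℝ) (x : ℝ → ℝ) : Prop :=
  (∃ C : ℝ, ∀ t₁ ∈ Icc (0 : ℝ) T, ∀ t₂ ∈ Icc (0 : ℝ) T,
      |x t₂ - x t₁| ≤ C * |t₂ - t₁| ^ β) ∧
  ∀ t ∈ Icc (0 : ℝ) T, ∃ I : ℝ,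
    IsRSIntegral (fun τ => σ τ (x τ)) g 0 t I ∧
    x t = x₀ + (∫ τ in (0 : ℝ)..t, b τ (x τ)) + I

/-- Bisection of an index interval at the midpoint. -/
lemma exists_mid (t : ℕ → ℝ) (ht : Monotone t) {a b : ℕ} (hab : a < b) :
    ∃ j, a ≤ j ∧ j < b ∧ t j ≤ (t a + t b) / 2 ∧ (t a + t b) / 2 ≤ t (j + 1) := by
  classical
  have htab := ht hab.le
  have hex : ∃ k, a < k ∧ (t a + t b) / 2 ≤ t k := ⟨b, hab, by linarith⟩
  obtain ⟨h1, h2⟩ := Nat.find_spec hex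
  have h3 : Nat.find hex ≤ b := Nat.find_min' hex ⟨hab, by linarith⟩
  refine ⟨Nat.find hex - 1, by omega, by omega, ?_, ?_⟩
  · by_cases h : a < Nat.find hex - 1
    · have := Nat.find_min hex (m := Nat.find hex - 1) (by omega)
      push Not at this
      exact (this h).le
    · have : Nat.find hex - 1 = a := by omega
      rw [this]; linarith
  · rwa [Nat.sub_add_cancel (by omega)]

/-- Discrete Young inequality. -/
lemma young_discrete {f g : ℝ → ℝ} {K G β γ D : ℝ} (hK : 0 ≤ K) (hG : 0 ≤ G)
    (hβ : 0 < β) (hγ : 0 < γ)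
    (hg : ∀ x y : ℝ, |g x - g y| ≤ G * |x - y| ^ γ)
    (hD : 0 ≤ D) (hD2 : 2 * (D * (1 / 2) ^ (β + γ)) + 2 * (K * G) ≤ D)
    (t : ℕ → ℝ) (ht : Monotone t) (n : ℕ) :
    ∀ a b : ℕ, a ≤ b → b - a = n →
    (∀ u ∈ Icc (t a) (t b), ∀ v ∈ Icc (t a) (t b), |f u - f v| ≤ K * |u - v| ^ β) →
    |(∑ i ∈ Finset.Ico a b, f (t i) * (g (t (i + 1)) - g (t i))) - f (t a) * (g (t b) - g (t a))|
      ≤ D * (t b - t a) ^ (β + γ) := by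
  induction n using Nat.strong_induction_on with
  | _ n ih =>
  intro a b hab hn hf
  rcases hab.eq_or_lt with rfl | hlt
  · simp
    have : (0 : ℝ) ^ (β + γ) = 0 := Real.zero_rpow (by linarith)
    simp [this]
  obtain ⟨j, haj, hjb, hj1, hj2⟩ := exists_mid t ht hlt
  have m1 := ht haj
  have m2 := ht (Nat.le_succ j)
  have m3 : t (j + 1) ≤ t b := ht hjb
  have m4 := ht hab
  simp only [Nat.succ_eq_add_one] at m2
  have e1 := ih (j - a) (by omega) a j haj rfl (fun u hu v hv =>
    hf u ⟨hu.1, by linarith [hu.2]⟩ v ⟨hv.1, by linarith [hv.2]⟩)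
  have e2 := ih (b - (j + 1)) (by omega) (j + 1) b hjb rfl (fun u hu v hv =>
    hf u ⟨by linarith [hu.1], hu.2⟩ v ⟨by linarith [hv.1], hv.2⟩)
  set L := t b - t a with hL
  have hL0 : 0 ≤ L := by linarith
  have hθ : 0 < β + γ := by linarith
  have half : ∀ y : ℝ, 0 ≤ y → y ≤ L / 2 → D * y ^ (β + γ) ≤ D * (1 / 2) ^ (β + γ) * L ^ (β + γ) := by
    intro y hy hyL
    rw [mul_assoc, ← Real.mul_rpow (by norm_num) hL0]
    apply mul_le_mul_of_nonneg_left _ hD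
    apply Real.rpow_le_rpow hy _ hθ.le
    linarith
  have e1' := e1.trans (half _ (by linarith) (by linarith))
  have e2' := e2.trans (half _ (by linarith) (by linarith))
  have cross : ∀ u v w : ℝ, t a ≤ u → u ≤ t b → |v - w| ≤ L →
      |(f u - f (t a)) * (g v - g w)| ≤ K * G * L ^ (β + γ) := by
    intro u v w h1 h2 h3
    rw [abs_mul, Real.rpow_add_of_nonneg hL0 hβ.le hγ.le]
    have q1 : |f u - f (t a)| ≤ K * L ^ β := by
      refine (hf u ⟨h1, h2⟩ (t a) ⟨le_refl _, m4⟩).trans ?_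
      apply mul_le_mul_of_nonneg_left _ hK
      apply Real.rpow_le_rpow (abs_nonneg _) _ hβ.le
      rw [abs_of_nonneg (by linarith)]; linarith
    have q2 : |g v - g w| ≤ G * L ^ γ := by
      refine (hg v w).trans ?_
      apply mul_le_mul_of_nonneg_left _ hG
      exact Real.rpow_le_rpow (abs_nonneg _) h3 hγ.le
    calc _ ≤ (K * L ^ β) * (G * L ^ γ) := by gcongr
      _ = _ := by ring
  have c1 := cross (t j) (t (j + 1)) (t j) m1 (by linarith) (by
    rw [abs_of_nonneg (by linarith)]; linarith)
  have c2 := cross (t (j + 1)) (t b) (t (j + 1)) (by linarith) m3 (by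
    rw [abs_of_nonneg (by linarith)]; linarith)
  rw [← Finset.sum_Ico_consecutive _ haj hjb.le, Finset.sum_eq_sum_Ico_succ_bot hjb]
  have hfin : (2 * (D * (1 / 2) ^ (β + γ)) + 2 * (K * G)) * L ^ (β + γ) ≤ D * L ^ (β + γ) :=
    mul_le_mul_of_nonneg_right hD2 (Real.rpow_nonneg hL0 _)
  rw [abs_le] at *
  constructor <;> nlinarith [e1'.1, e1'.2, e2'.1, e2'.2, c1.1, c1.2, c2.1, c2.2]

/-- Grid sums. -/
noncomputable def gridSum (f g : ℝ → ℝ) (T : ℝ) (n : ℕ) (t : ℝ) : ℝ :=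
  ∑ i ∈ Finset.range (n + 1), f (i * (T / (n + 1))) *
    (g (min ((i + 1 : ℕ) * (T / (n + 1))) t) - g (min (i * (T / (n + 1))) t))

lemma clamp_id (g : ℝ → ℝ) {a s t : ℝ} (hst : s ≤ t) :
    g (min a t) - g (min a s) = g (max s (min a t)) - g s := by
  rcases le_total a s with h | h
  · rw [min_eq_left h, min_eq_left (h.trans hst), max_eq_left h]; ring
  · rw [min_eq_right h, max_eq_right (le_min h hst)]

lemma gridSum_incr {f g : ℝ → ℝ} {K K' G β γ D T s t : ℝ} (hK : 0 ≤ K) (hK' : 0 ≤ K') (hG : 0 ≤ G)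
    (hβ : 0 < β) (hγ : 0 < γ) (hT : 0 < T)
    (hg : ∀ x y : ℝ, |g x - g y| ≤ G * |x - y| ^ γ)
    (hD : 0 ≤ D) (hD2 : 2 * (D * (1 / 2) ^ (β + γ)) + 2 * (K' * G) ≤ D)
    (hs : 0 ≤ s) (hst : s ≤ t) (htT : t ≤ T)
    (hf : ∀ u ∈ Icc 0 T, ∀ v ∈ Icc 0 T, |f u - f v| ≤ K * |u - v| ^ β)
    (hf' : ∀ u ∈ Icc s t, ∀ v ∈ Icc s t, |f u - f v| ≤ K' * |u - v| ^ β) (n : ℕ) :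
    |gridSum f g T n t - gridSum f g T n s - f s * (g t - g s)| ≤
      D * (t - s) ^ (β + γ) + K * G * (T / (n + 1)) ^ (β + γ) := by
  set δ := T / (n + 1) with hδ
  have hδ0 : 0 < δ := by positivity
  set c : ℕ → ℝ := fun i => max s (min (i * δ) t) with hc
  have hcm : Monotone c := by
    intro i j hij
    have : (i : ℝ) * δ ≤ j * δ := by gcongr
    exact max_le_max_left _ (min_le_min_right _ this)
  have hc0 : c 0 = s := by
    simp only [hc, Nat.cast_zero, zero_mul]
    rw [min_eq_left (hs.trans hst), max_eq_left hs]
  have hcN : c (n + 1) = t := by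
    have : ((n + 1 : ℕ) : ℝ) * δ = T := by rw [hδ]; push_cast; field_simp
    simp only [hc, this]
    rw [min_eq_right htT, max_eq_right hst]
  have hY := young_discrete hK' hG hβ hγ hg hD hD2 c hcm (n + 1) 0 (n + 1) (by omega) (by omega)
    (by rw [hc0, hcN]; exact hf')
  rw [hc0, hcN, ← Finset.range_eq_Ico] at hY
  have hsplit : gridSum f g T n t - gridSum f g T n s =
      (∑ i ∈ Finset.range (n + 1), f (c i) * (g (c (i + 1)) - g (c i))) +
      ∑ i ∈ Finset.range (n + 1), (f (i * δ) - f (c i)) * (g (c (i + 1)) - g (c i)) := by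
    rw [gridSum, gridSum, ← Finset.sum_sub_distrib, ← Finset.sum_add_distrib]
    apply Finset.sum_congr rfl
    intro i _
    have h1 := clamp_id g (a := (i + 1 : ℕ) * δ) hst
    have h2 := clamp_id g (a := (i : ℕ) * δ) hst
    change _ = g (c (i + 1)) - g s at h1
    change _ = g (c i) - g s at h2
    rw [← hδ]
    linear_combination f (i * δ) * (h1 - h2)
  have herr : |∑ i ∈ Finset.range (n + 1), (f (i * δ) - f (c i)) * (g (c (i + 1)) - g (c i))| ≤
      K * G * δ ^ (β + γ) := by
    have hP : 0 ≤ K * G * δ ^ (β + γ) := by positivity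
    refine (Finset.abs_sum_le_sum_abs _ _).trans ?_
    have : ∀ i ∈ Finset.range (n + 1), |(f (i * δ) - f (c i)) * (g (c (i + 1)) - g (c i))| ≤
        if i = ⌊s / δ⌋₊ then K * G * δ ^ (β + γ) else 0 := by
      intro i hi
      have hiN : i < n + 1 := Finset.mem_range.1 hi
      have hz : ∀ z : ℝ, z = 0 → |z| ≤ if i = ⌊s / δ⌋₊ then K * G * δ ^ (β + γ) else 0 := by
        intro z hz
        rw [hz, abs_zero]
        split_ifs <;> simp [hP]
      have hi1 : (i : ℝ) * δ ≤ ((i + 1 : ℕ) : ℝ) * δ := by gcongr; simp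
      rcases le_total t (i * δ) with h | h
      · apply hz
        have : c i = t := by simp only [hc]; rw [min_eq_right h, max_eq_right hst]
        have h' : c (i + 1) = t := by
          simp only [hc]; rw [min_eq_right (h.trans hi1), max_eq_right hst]
        rw [this, h']; ring
      rcases le_or_gt s (i * δ) with h2 | h2
      · apply hz
        have : c i = i * δ := by simp only [hc]; rw [min_eq_left h, max_eq_right h2]
        rw [this]; ring
      have hci : c i = s := by simp only [hc]; rw [min_eq_left h, max_eq_left h2.le]
      rcases le_or_gt (((i + 1 : ℕ) : ℝ) * δ) s with h3 | h3
      · apply hz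
        have : c (i + 1) = s := by
          simp only [hc]; rw [min_eq_left (h3.trans hst), max_eq_left h3]
        rw [this, hci]; ring
      have hfl : i = ⌊s / δ⌋₊ := by
        symm
        rw [Nat.floor_eq_iff (by positivity)]
        refine ⟨by rw [le_div_iff₀ hδ0]; exact h2.le, by rw [div_lt_iff₀ hδ0]; exact_mod_cast h3⟩
      rw [if_pos hfl, hci, abs_mul, Real.rpow_add_of_nonneg hδ0.le hβ.le hγ.le]
      push_cast at h3
      have i0 : (0 : ℝ) ≤ i * δ := by positivity
      have q1 : |f (i * δ) - f s| ≤ K * δ ^ β := by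
        refine (hf _ ⟨i0, by linarith⟩ s ⟨hs, by linarith⟩).trans ?_
        apply mul_le_mul_of_nonneg_left _ hK
        apply Real.rpow_le_rpow (abs_nonneg _) _ hβ.le
        rw [abs_le]; constructor <;> linarith
      have q2 : |g (c (i + 1)) - g s| ≤ G * δ ^ γ := by
        refine (hg _ _).trans ?_
        apply mul_le_mul_of_nonneg_left _ hG
        apply Real.rpow_le_rpow (abs_nonneg _) _ hγ.le
        have hl : s ≤ c (i + 1) := le_max_left _ _
        have hu : c (i + 1) ≤ (i + 1) * δ := by
          simp only [hc]; push_cast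
          exact max_le (by linarith) (min_le_left _ _)
        rw [abs_le]; constructor <;> linarith
      calc _ ≤ (K * δ ^ β) * (G * δ ^ γ) := by gcongr
        _ = _ := by ring
    refine (Finset.sum_le_sum this).trans ?_
    rw [Finset.sum_ite_eq']
    split_ifs <;> simp [hP]
  rw [hsplit]
  rw [abs_le] at *
  constructor <;> linarith [hY.1, hY.2, herr.1, herr.2]

/-- The Young constant. -/
noncomputable def youngC (θ : ℝ) : ℝ := 2 / (1 - 2 * (1 / 2) ^ θ)

lemma youngC_aux {θ : ℝ} (hθ : 1 < θ) : 0 < 1 - 2 * (1 / 2 : ℝ) ^ θ := by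
  have : (1 / 2 : ℝ) ^ θ < (1 / 2 : ℝ) ^ (1 : ℝ) :=
    Real.rpow_lt_rpow_of_exponent_gt (by norm_num) (by norm_num) hθ
  rw [Real.rpow_one] at this
  linarith

lemma youngC_pos {θ : ℝ} (hθ : 1 < θ) : 0 < youngC θ := div_pos (by norm_num) (youngC_aux hθ)

lemma youngC_spec {θ M : ℝ} (hθ : 1 < θ) :
    2 * (youngC θ * M * (1 / 2) ^ θ) + 2 * M ≤ youngC θ * M := by
  have h := youngC_aux hθ
  have : youngC θ * (1 - 2 * (1 / 2 : ℝ) ^ θ) = 2 := by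
    rw [youngC]; field_simp
  apply le_of_eq
  linear_combination -M * this

/-- Sewing: existence of the indefinite Young integral with local estimates. -/
lemma young_exists {f g : ℝ → ℝ} {K G β γ T : ℝ} (hK : 0 ≤ K) (hG : 0 ≤ G)
    (hβ : 0 < β) (hγ : 0 < γ) (hθ : 1 < β + γ) (hT : 0 < T)
    (hg : ∀ x y : ℝ, |g x - g y| ≤ G * |x - y| ^ γ)
    (hf : ∀ u ∈ Icc 0 T, ∀ v ∈ Icc 0 T, |f u - f v| ≤ K * |u - v| ^ β) :
    ∃ J : ℝ → ℝ, J 0 = 0 ∧ ∀ s t K' : ℝ, 0 ≤ s → s ≤ t → t ≤ T → 0 ≤ K' →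
      (∀ u ∈ Icc s t, ∀ v ∈ Icc s t, |f u - f v| ≤ K' * |u - v| ^ β) →
      |J t - J s - f s * (g t - g s)| ≤ youngC (β + γ) * (K' * G) * (t - s) ^ (β + γ) := by
  have hθ0 : 0 < β + γ := by linarith
  have hC := youngC_pos hθ
  have key : ∀ s t K' : ℝ, 0 ≤ s → s ≤ t → t ≤ T → 0 ≤ K' →
      (∀ u ∈ Icc s t, ∀ v ∈ Icc s t, |f u - f v| ≤ K' * |u - v| ^ β) → ∀ n : ℕ,
      |gridSum f g T n t - gridSum f g T n s - f s * (g t - g s)| ≤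
        youngC (β + γ) * (K' * G) * (t - s) ^ (β + γ) + K * G * (T / (n + 1)) ^ (β + γ) := by
    intro s t K' hs hst htT hK' hf' n
    exact gridSum_incr hK hK' hG hβ hγ hT hg (by positivity) (youngC_spec hθ) hs hst htT hf hf' n
  have h0 : ∀ n, gridSum f g T n 0 = 0 := by
    intro n
    apply Finset.sum_eq_zero
    intro i _
    rw [min_eq_right (by positivity), min_eq_right (by positivity)]; ring
  let U : Ultrafilter ℕ := Filter.hyperfilter ℕ
  have hU : (U : Filter ℕ) ≤ Filter.atTop := Nat.hyperfilter_le_atTop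
  have hlim : ∀ t, ∃ l, t ∈ Icc 0 T → Filter.Tendsto (fun n => gridSum f g T n t) U (nhds l) := by
    intro t
    by_cases ht : t ∈ Icc 0 T
    swap
    · exact ⟨0, fun h => absurd h ht⟩
    set M := |f 0 * (g t - g 0)| + youngC (β + γ) * (K * G) * (t - 0) ^ (β + γ) +
      K * G * T ^ (β + γ) with hM
    have hb : ∀ n, gridSum f g T n t ∈ Icc (-M) M := by
      intro n
      have := key 0 t K le_rfl ht.1 ht.2 hK (fun u hu v hv =>
        hf u ⟨hu.1, hu.2.trans ht.2⟩ v ⟨hv.1, hv.2.trans ht.2⟩) n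
      rw [h0] at this
      have h2 : K * G * (T / (n + 1)) ^ (β + γ) ≤ K * G * T ^ (β + γ) := by
        have : T / (n + 1) ≤ T := div_le_self hT.le (by linarith [n.cast_nonneg (α := ℝ)])
        gcongr
      have h3 := abs_le.1 this
      have h4 := abs_le.1 (le_refl |f 0 * (g t - g 0)|)
      constructor <;> linarith [h3.1, h3.2, h4.1, h4.2]
    obtain ⟨l, -, hl⟩ := (isCompact_Icc (a := -M) (b := M)).ultrafilter_le_nhds
      (U.map (fun n => gridSum f g T n t))
      (by
        rw [Filter.le_principal_iff]
        exact Filter.mem_map.2 (Filter.univ_mem' hb))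
    exact ⟨l, fun _ => hl⟩
  choose J hJ using hlim
  refine ⟨J, ?_, ?_⟩
  · have := hJ 0 ⟨le_rfl, hT.le⟩
    simp only [h0] at this
    exact tendsto_nhds_unique this tendsto_const_nhds
  · intro s t K' hs hst htT hK' hf'
    have l1 := hJ t ⟨hs.trans hst, htT⟩
    have l2 := hJ s ⟨hs, hst.trans htT⟩
    have l3 : Filter.Tendsto (fun n : ℕ => youngC (β + γ) * (K' * G) * (t - s) ^ (β + γ) +
        K * G * (T / (n + 1)) ^ (β + γ)) U
        (nhds (youngC (β + γ) * (K' * G) * (t - s) ^ (β + γ) + K * G * 0 ^ (β + γ))) := by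
      apply Filter.Tendsto.mono_left _ hU
      apply Filter.Tendsto.const_add
      apply Filter.Tendsto.const_mul
      apply Filter.Tendsto.rpow_const
      · have := (tendsto_one_div_add_atTop_nhds_zero_nat (𝕜 := ℝ)).const_mul T
        simpa [div_eq_mul_inv] using this
      · right; exact hθ0.le
    rw [Real.zero_rpow hθ0.ne', mul_zero, add_zero] at l3
    exact le_of_tendsto_of_tendsto' ((l1.sub l2).sub_const _).abs l3
      (key s t K' hs hst htT hK' hf')

lemma rs_of_young {f g J : ℝ → ℝ} {θ D T t : ℝ} (hθ : 1 < θ) (hD : 0 ≤ D) (ht : t ∈ Icc 0 T)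
    (hJ0 : J 0 = 0)
    (hJ : ∀ s t : ℝ, 0 ≤ s → s ≤ t → t ≤ T → |J t - J s - f s * (g t - g s)| ≤ D * (t - s) ^ θ) :
    IsRSIntegral f g 0 t (J t) := by
  intro ε hε
  have hlim : Filter.Tendsto (fun δ : ℝ => D * δ ^ (θ - 1) * t) (nhdsWithin 0 (Ioi 0)) (nhds 0) := by
    have : Filter.Tendsto (fun δ : ℝ => D * δ ^ (θ - 1) * t) (nhds 0)
        (nhds (D * 0 ^ (θ - 1) * t)) := by
      apply Filter.Tendsto.mul_const
      apply Filter.Tendsto.const_mul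
      exact Filter.tendsto_id.rpow_const (Or.inr (by linarith))
    rw [Real.zero_rpow (by linarith), mul_zero, zero_mul] at this
    exact this.mono_left nhdsWithin_le_nhds
  obtain ⟨δ, hδ, hδ0⟩ := ((hlim.eventually (gt_mem_nhds hε)).and self_mem_nhdsWithin).exists
  refine ⟨δ, hδ0, ?_⟩
  intro n p hp hp0 hpn hmesh
  refine lt_of_le_of_lt ?_ hδ
  have tele : ∀ φ : ℝ → ℝ, ∑ i : Fin n, (φ (p i.succ) - φ (p i.castSucc)) = φ t - φ 0 := by
    intro φ
    have h1 := Fin.sum_univ_succ (fun i => φ (p i))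
    have h2 := Fin.sum_univ_castSucc (fun i => φ (p i))
    rw [Finset.sum_sub_distrib, ← hp0, ← hpn]
    linarith
  have hJs := tele J
  have hids := tele id
  simp only [id, sub_zero] at hids
  rw [hJ0, sub_zero] at hJs
  rw [← hJs, RSsum, ← Finset.sum_sub_distrib]
  refine (Finset.abs_sum_le_sum_abs _ _).trans ?_
  rw [← hids, Finset.mul_sum]
  apply Finset.sum_le_sum
  intro i _
  have m : p i.castSucc ≤ p i.succ := hp (Fin.castSucc_lt_succ).le
  have m0 : 0 ≤ p i.castSucc := by rw [← hp0]; exact hp (Fin.zero_le _)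
  have mn : p i.succ ≤ t := by rw [← hpn]; exact hp (Fin.le_last _)
  have := hJ _ _ m0 m (mn.trans ht.2)
  rw [abs_sub_comm]
  refine this.trans ?_
  set d := p i.succ - p i.castSucc
  have hd : 0 ≤ d := by simp only [d]; linarith
  have : d ^ θ = d ^ (θ - 1) * d := by
    nth_rewrite 3 [← Real.rpow_one d]
    rw [← Real.rpow_add_of_nonneg hd (by linarith) (by norm_num)]
    congr 1; ring
  rw [this, ← mul_assoc]
  have : d ^ (θ - 1) ≤ δ ^ (θ - 1) := Real.rpow_le_rpow hd (hmesh i).le (by linarith)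
  gcongr

lemma exists_partition {a b δ : ℝ} (hab : a ≤ b) (hδ : 0 < δ) :
    ∃ (n : ℕ) (t : Fin (n + 1) → ℝ), Monotone t ∧ t 0 = a ∧ t (Fin.last n) = b ∧
      ∀ i : Fin n, t i.succ - t i.castSucc < δ := by
  obtain ⟨n, hn⟩ := exists_nat_gt ((b - a) / δ)
  have hn0 : (0 : ℝ) < n := lt_of_le_of_lt (div_nonneg (by linarith) hδ.le) hn
  have hq : 0 ≤ (b - a) / n := div_nonneg (by linarith) hn0.le
  refine ⟨n, fun i => a + (i : ℕ) * ((b - a) / n), ?_, ?_, ?_, ?_⟩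
  · intro i j hij
    have : ((i : ℕ) : ℝ) ≤ ((j : ℕ) : ℝ) := by exact_mod_cast hij
    have := mul_le_mul_of_nonneg_right this hq
    dsimp only; linarith
  · simp
  · simp; field_simp; ring
  · intro i
    simp only [Fin.val_succ, Fin.val_castSucc]
    push_cast
    have : (b - a) / n < δ := by
      rw [div_lt_iff₀ hδ] at hn
      rw [div_lt_iff₀ hn0]; linarith
    linarith

lemma rs_unique {f g : ℝ → ℝ} {a b I I' : ℝ} (hab : a ≤ b) (h : IsRSIntegral f g a b I)
    (h' : IsRSIntegral f g a b I') : I = I' := by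
  by_contra hne
  have hpos : 0 < |I - I'| := abs_pos.2 (sub_ne_zero.2 hne)
  obtain ⟨δ, hδ, H⟩ := h (|I - I'| / 2) (by positivity)
  obtain ⟨δ', hδ', H'⟩ := h' (|I - I'| / 2) (by positivity)
  obtain ⟨n, t, t1, t2, t3, t4⟩ := exists_partition hab (lt_min hδ hδ')
  have e1 := H n t t1 t2 t3 (fun i => (t4 i).trans_le (min_le_left _ _))
  have e2 := H' n t t1 t2 t3 (fun i => (t4 i).trans_le (min_le_right _ _))
  have := abs_sub_le I (RSsum f g n t) I'
  rw [abs_sub_comm I (RSsum f g n t)] at this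
  linarith

lemma rs_sub {f f' g : ℝ → ℝ} {a b I I' : ℝ} (h : IsRSIntegral f g a b I)
    (h' : IsRSIntegral f' g a b I') : IsRSIntegral (fun τ => f τ - f' τ) g a b (I - I') := by
  intro ε hε
  obtain ⟨δ, hδ, H⟩ := h (ε / 2) (by positivity)
  obtain ⟨δ', hδ', H'⟩ := h' (ε / 2) (by positivity)
  refine ⟨min δ δ', lt_min hδ hδ', ?_⟩
  intro n t t1 t2 t3 t4
  have e1 := H n t t1 t2 t3 (fun i => (t4 i).trans_le (min_le_left _ _))
  have e2 := H' n t t1 t2 t3 (fun i => (t4 i).trans_le (min_le_right _ _))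
  have : RSsum (fun τ => f τ - f' τ) g n t = RSsum f g n t - RSsum f' g n t := by
    simp only [RSsum, ← Finset.sum_sub_distrib]
    exact Finset.sum_congr rfl (fun i _ => by ring)
  rw [this]
  rw [abs_lt] at *
  constructor <;> linarith [e1.1, e1.2, e2.1, e2.2]

/-- The interface: existence of Young integrals with local estimates. -/
lemma young_main {f g : ℝ → ℝ} {K G β γ T : ℝ} (hK : 0 ≤ K) (hG : 0 ≤ G)
    (hβ : 0 < β) (hγ : 0 < γ) (hθ : 1 < β + γ) (hT : 0 < T)
    (hg : ∀ x y : ℝ, |g x - g y| ≤ G * |x - y| ^ γ)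
    (hf : ∀ u ∈ Icc 0 T, ∀ v ∈ Icc 0 T, |f u - f v| ≤ K * |u - v| ^ β) :
    ∃ J : ℝ → ℝ, J 0 = 0 ∧ (∀ t ∈ Icc 0 T, IsRSIntegral f g 0 t (J t)) ∧
      ∀ s t K' : ℝ, 0 ≤ s → s ≤ t → t ≤ T → 0 ≤ K' →
      (∀ u ∈ Icc s t, ∀ v ∈ Icc s t, |f u - f v| ≤ K' * |u - v| ^ β) →
      |J t - J s - f s * (g t - g s)| ≤ youngC (β + γ) * (K' * G) * (t - s) ^ (β + γ) := by
  obtain ⟨J, h0, h⟩ := young_exists hK hG hβ hγ hθ hT hg hf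
  refine ⟨J, h0, ?_, h⟩
  intro t ht
  have := youngC_pos hθ
  refine rs_of_young (D := youngC (β + γ) * (K * G)) hθ (by positivity) ht h0 ?_
  intro s t hs hst htT
  exact h s t K hs hst htT hK (fun u hu v hv =>
    hf u ⟨hs.trans hu.1, hu.2.trans htT⟩ v ⟨hs.trans hv.1, hv.2.trans htT⟩)

/-- Weighted local Hölder bound. -/
def WH (T h β N : ℝ) (z : ℝ → ℝ) : Prop :=
  ∀ s t, 0 ≤ s → s ≤ t → t ≤ T → t - s ≤ h → |z t - z s| ≤ N * Real.exp (t / h) * (t - s) ^ β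

lemma WH.sup {T h β N : ℝ} {z : ℝ → ℝ} (H : WH T h β N z) (hh : 0 < h) (hh1 : h ≤ 1)
    (hβ : 0 < β) (hN : 0 ≤ N) {t : ℝ} (ht0 : 0 ≤ t) (htT : t ≤ T) :
    |z t - z 0| ≤ 2 * N * Real.exp (t / h) := by
  have key : ∀ k : ℕ, ∀ t, 0 ≤ t → t ≤ T → t ≤ k * h → |z t - z 0| ≤ 2 * N * Real.exp (t / h) := by
    intro k
    induction k with
    | zero =>
      intro t h0 _ h2
      have : t = 0 := by simp at h2; linarith
      subst this
      simp only [sub_self, abs_zero]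
      positivity
    | succ k ih =>
      intro t h0 h1 h2
      have hE := Real.exp_pos (t / h)
      rcases le_total t h with h3 | h3
      · have := H 0 t le_rfl h0 h1 (by linarith)
        have h4 : (t - 0) ^ β ≤ 1 := Real.rpow_le_one (by linarith) (by linarith) hβ.le
        have : N * Real.exp (t / h) * (t - 0) ^ β ≤ N * Real.exp (t / h) * 1 := by gcongr
        have : 0 ≤ N * Real.exp (t / h) := by positivity
        linarith
      · have e1 := ih (t - h) (by linarith) (by linarith) (by push_cast at h2; linarith)
        have e2 := H (t - h) t (by linarith) (by linarith) h1 (by linarith)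
        have h4 : (t - (t - h)) ^ β ≤ 1 := Real.rpow_le_one (by linarith) (by linarith) hβ.le
        have e3 : N * Real.exp (t / h) * (t - (t - h)) ^ β ≤ N * Real.exp (t / h) * 1 := by gcongr
        have e4 : Real.exp (t / h) = Real.exp ((t - h) / h) * Real.exp 1 := by
          rw [← Real.exp_add]; congr 1; field_simp; ring
        have e5 : (2 : ℝ) ≤ Real.exp 1 := by have := Real.add_one_le_exp (1 : ℝ); linarith
        have e6 : Real.exp ((t - h) / h) * 2 ≤ Real.exp (t / h) := by rw [e4]; gcongr
        have e7 := mul_le_mul_of_nonneg_left e6 hN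
        have := abs_sub_le (z t) (z (t - h)) (z 0)
        linarith
  obtain ⟨k, hk⟩ := exists_nat_gt (t / h)
  rw [div_lt_iff₀ hh] at hk
  exact key k t ht0 htT hk.le

lemma WH.holder {T h β N : ℝ} {z : ℝ → ℝ} (H : WH T h β N z) (hh : 0 < h) (hh1 : h ≤ 1)
    (hβ : 0 < β) (hN : 0 ≤ N) : ∀ u ∈ Icc 0 T, ∀ v ∈ Icc 0 T,
      |z u - z v| ≤ 4 * N * Real.exp (T / h) / h ^ β * |u - v| ^ β := by
  have hb : 0 < h ^ β := Real.rpow_pos_of_pos hh _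
  have hb1 : h ^ β ≤ 1 := Real.rpow_le_one hh.le hh1 hβ.le
  have main : ∀ s t, 0 ≤ s → s ≤ t → t ≤ T →
      |z t - z s| ≤ 4 * N * Real.exp (T / h) / h ^ β * (t - s) ^ β := by
    intro s t h0 hst htT
    have hEt : Real.exp (t / h) ≤ Real.exp (T / h) := by gcongr
    have hEs : Real.exp (s / h) ≤ Real.exp (T / h) := by gcongr; linarith
    have hp : 0 ≤ (t - s) ^ β := Real.rpow_nonneg (by linarith) _
    rcases le_total (t - s) h with h3 | h3
    · refine (H s t h0 hst htT h3).trans ?_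
      apply mul_le_mul_of_nonneg_right _ hp
      rw [le_div_iff₀ hb]
      have : N * Real.exp (t / h) ≤ N * Real.exp (T / h) := by gcongr
      have h5 : 0 ≤ N * Real.exp (T / h) := by positivity
      have h6 : 0 ≤ N * Real.exp (t / h) := by positivity
      nlinarith
    · have a1 := H.sup hh hh1 hβ hN h0 (hst.trans htT)
      have a2 := H.sup hh hh1 hβ hN (h0.trans hst) htT
      have a3 := abs_sub_le (z t) (z 0) (z s)
      rw [abs_sub_comm (z 0)] at a3
      have a4 := mul_le_mul_of_nonneg_left hEt hN
      have a5 := mul_le_mul_of_nonneg_left hEs hN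
      have a6 : h ^ β ≤ (t - s) ^ β := Real.rpow_le_rpow hh.le h3 hβ.le
      rw [div_mul_eq_mul_div, le_div_iff₀ hb]
      have a7 : |z t - z s| ≤ 4 * N * Real.exp (T / h) := by linarith
      exact mul_le_mul a7 a6 hb.le (by positivity)
  intro u hu v hv
  rcases le_total v u with h | h
  · rw [abs_of_nonneg (sub_nonneg.2 h)]
    exact main v u hv.1 h hu.2
  · rw [abs_sub_comm, abs_sub_comm u, abs_of_nonneg (sub_nonneg.2 h)]
    exact main u v hu.1 h hv.2

lemma exists_small {e ρ h₀ : ℝ} (he : 0 < e) (M : ℝ) (hρ : 0 < ρ) (hh : 0 < h₀) :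
    ∃ h, 0 < h ∧ h ≤ h₀ ∧ h ^ e * M ≤ ρ := by
  have hlim : Filter.Tendsto (fun h : ℝ => h ^ e * M) (nhdsWithin 0 (Ioi 0)) (nhds 0) := by
    have : Filter.Tendsto (fun h : ℝ => h ^ e * M) (nhds 0) (nhds (0 ^ e * M)) := by
      apply Filter.Tendsto.mul_const
      exact Filter.tendsto_id.rpow_const (Or.inr he.le)
    rw [Real.zero_rpow he.ne', zero_mul] at this
    exact this.mono_left nhdsWithin_le_nhds
  have h2 : ∀ᶠ h in nhdsWithin (0 : ℝ) (Ioi 0), h < h₀ :=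
    nhdsWithin_le_nhds (gt_mem_nhds hh)
  obtain ⟨h, ⟨h1, h2⟩, h3⟩ :=
    (((hlim.eventually (gt_mem_nhds hρ)).and h2).and self_mem_nhdsWithin).exists
  exact ⟨h, h3, h2.le, h1.le⟩

lemma holder_cont_s6 {x : ℝ → ℝ} {R β T : ℝ} (hβ : 0 < β)
    (hx : ∀ u ∈ Icc 0 T, ∀ v ∈ Icc 0 T, |x u - x v| ≤ R * |u - v| ^ β) :
    ContinuousOn x (Icc 0 T) := by
  intro u hu
  rw [ContinuousWithinAt, tendsto_iff_dist_tendsto_zero]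
  have hlim : Filter.Tendsto (fun v : ℝ => R * |v - u| ^ β) (nhdsWithin u (Icc 0 T)) (nhds 0) := by
    have : Filter.Tendsto (fun v : ℝ => R * |v - u| ^ β) (nhds u) (nhds (R * |u - u| ^ β)) := by
      apply Filter.Tendsto.const_mul
      exact ((Filter.tendsto_id.sub_const u).abs).rpow_const (Or.inr hβ.le)
    rw [sub_self, abs_zero, Real.zero_rpow hβ.ne', mul_zero] at this
    exact this.mono_left nhdsWithin_le_nhds
  refine squeeze_zero' (Filter.Eventually.of_forall fun v => dist_nonneg) ?_ hlim
  filter_upwards [self_mem_nhdsWithin] with v hv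
  rw [Real.dist_eq]
  exact hx v hv u hu

lemma lip_cont {b : ℝ → ℝ → ℝ} {B T : ℝ} {x : ℝ → ℝ}
    (hb : ∀ t₁ x₁ t₂ x₂ : ℝ, |b t₂ x₂ - b t₁ x₁| ≤ B * (|t₂ - t₁| + |x₂ - x₁|))
    (hx : ContinuousOn x (Icc 0 T)) : ContinuousOn (fun τ => b τ (x τ)) (Icc 0 T) := by
  have hc : Continuous fun p : ℝ × ℝ => b p.1 p.2 := by
    rw [continuous_iff_continuousAt]
    intro p
    rw [ContinuousAt, tendsto_iff_dist_tendsto_zero]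
    have hlim : Filter.Tendsto (fun q : ℝ × ℝ => B * (|q.1 - p.1| + |q.2 - p.2|)) (nhds p)
        (nhds 0) := by
      have : Continuous (fun q : ℝ × ℝ => B * (|q.1 - p.1| + |q.2 - p.2|)) := by fun_prop
      simpa using this.tendsto p
    refine squeeze_zero (fun v => dist_nonneg) (fun q => ?_) hlim
    rw [Real.dist_eq]
    exact hb _ _ _ _
  exact hc.comp_continuousOn (continuousOn_id.prodMk hx)

/-- Increment estimate. -/
lemma inc_est {f g φ p : ℝ → ℝ} {K G β γ T c h : ℝ} (hK : 0 ≤ K) (hG : 0 ≤ G)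
    (hβ : 0 < β) (hβγ : β < γ) (hγ1 : γ ≤ 1) (hθ : 1 < β + γ) (hT : 0 < T) (hh1 : h ≤ 1)
    (hg : ∀ x y : ℝ, |g x - g y| ≤ G * |x - y| ^ γ)
    (hf : ∀ u ∈ Icc 0 T, ∀ v ∈ Icc 0 T, |f u - f v| ≤ K * |u - v| ^ β)
    (hφ : ContinuousOn φ (Icc 0 T))
    (hp : ∀ t ∈ Icc 0 T, ∃ I, IsRSIntegral f g 0 t I ∧ p t = c + (∫ τ in (0 : ℝ)..t, φ τ) + I)
    {s t a₁ a₂ K' : ℝ} (hs : 0 ≤ s) (hst : s ≤ t) (htT : t ≤ T) (hsh : t - s ≤ h)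
    (ha₁ : ∀ u ∈ Icc s t, |φ u| ≤ a₁) (ha₂ : |f s| ≤ a₂) (hK' : 0 ≤ K')
    (hf' : ∀ u ∈ Icc s t, ∀ v ∈ Icc s t, |f u - f v| ≤ K' * |u - v| ^ β) :
    |p t - p s| ≤ h ^ (γ - β) * (a₁ + a₂ * G + youngC (β + γ) * (K' * G)) * (t - s) ^ β := by
  obtain ⟨J, -, hJ1, hJ2⟩ := young_main hK hG hβ (hβ.trans hβγ) hθ hT hg hf
  have hpJ : ∀ t ∈ Icc 0 T, p t = c + (∫ τ in (0 : ℝ)..t, φ τ) + J t := by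
    intro t ht
    obtain ⟨I, h1, h2⟩ := hp t ht
    rw [h2, rs_unique ht.1 h1 (hJ1 t ht)]
  have hC := youngC_pos hθ
  have hY := hJ2 s t K' hs hst htT hK' hf'
  set d := t - s with hd
  have hd0 : 0 ≤ d := by linarith
  have hd1 : d ≤ 1 := by linarith
  set η := h ^ (γ - β)
  have ha₁0 : 0 ≤ a₁ := (abs_nonneg _).trans (ha₁ s ⟨le_rfl, hst⟩)
  have ha₂0 : 0 ≤ a₂ := (abs_nonneg _).trans ha₂
  have hdβ : 0 ≤ d ^ β := Real.rpow_nonneg hd0 _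
  have hdη : d ^ (γ - β) ≤ η := Real.rpow_le_rpow hd0 hsh (by linarith)
  have P : ∀ e, γ ≤ e → d ^ e ≤ η * d ^ β := by
    intro e he
    calc d ^ e ≤ d ^ γ := by
          rcases hd0.eq_or_lt with h0 | h0
          · rw [← h0, Real.zero_rpow (by linarith), Real.zero_rpow (by linarith)]
          · exact Real.rpow_le_rpow_of_exponent_ge h0 hd1 he
      _ = d ^ (γ - β) * d ^ β := by
          rw [← Real.rpow_add_of_nonneg hd0 (by linarith) hβ.le]; congr 1; ring
      _ ≤ _ := by gcongr
  have hi1 : IntervalIntegrable φ MeasureTheory.volume 0 s := by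
    apply ContinuousOn.intervalIntegrable
    rw [uIcc_of_le hs]
    exact hφ.mono (Icc_subset_Icc_right (hst.trans htT))
  have hi2 : IntervalIntegrable φ MeasureTheory.volume 0 t := by
    apply ContinuousOn.intervalIntegrable
    rw [uIcc_of_le (hs.trans hst)]
    exact hφ.mono (Icc_subset_Icc_right htT)
  have hint : |(∫ τ in (0 : ℝ)..t, φ τ) - ∫ τ in (0 : ℝ)..s, φ τ| ≤ a₁ * (η * d ^ β) := by
    rw [intervalIntegral.integral_interval_sub_left hi2 hi1]
    have := intervalIntegral.norm_integral_le_of_norm_le_const (a := s) (b := t) (f := φ) (C := a₁)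
      (fun u hu => by
        rw [uIoc_of_le hst] at hu
        exact ha₁ u ⟨hu.1.le, hu.2⟩)
    rw [Real.norm_eq_abs, abs_of_nonneg (sub_nonneg.2 hst)] at this
    refine this.trans ?_
    have := P 1 hγ1
    rw [Real.rpow_one] at this
    gcongr
  have hfg : |f s * (g t - g s)| ≤ a₂ * G * (η * d ^ β) := by
    rw [abs_mul, mul_assoc]
    have h1 := hg t s
    rw [abs_of_nonneg hd0] at h1
    have h2 := P γ le_rfl
    have h3 : |g t - g s| ≤ G * (η * d ^ β) := h1.trans (by gcongr)
    gcongr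
  have hY' : |J t - J s - f s * (g t - g s)| ≤ youngC (β + γ) * (K' * G) * (η * d ^ β) := by
    refine hY.trans ?_
    have := P (β + γ) (by linarith)
    gcongr
  rw [hpJ t ⟨hs.trans hst, htT⟩, hpJ s ⟨hs, hst.trans htT⟩]
  rw [abs_le] at *
  constructor <;> linarith [hint.1, hint.2, hfg.1, hfg.2, hY'.1, hY'.2]

lemma four_point {σ σx : ℝ → ℝ → ℝ} {S : ℝ} (hS : 0 ≤ S)
    (hσdx : ∀ t x : ℝ, HasDerivAt (fun y => σ t y) (σx t x) x)
    (hσ : ∀ t₁ x₁ t₂ x₂ : ℝ, |σ t₂ x₂ - σ t₁ x₁| ≤ S * (|t₂ - t₁| + |x₂ - x₁|))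
    (hσ' : ∀ t₁ x₁ t₂ x₂ : ℝ, |σx t₂ x₂ - σx t₁ x₁| ≤ S * (|t₂ - t₁| + |x₂ - x₁|))
    (t s x₁ y₁ x₂ y₂ : ℝ) :
    |(σ t x₁ - σ t y₁) - (σ s x₂ - σ s y₂)| ≤
      S * |(x₁ - y₁) - (x₂ - y₂)| + S * |x₂ - y₂| * (|t - s| + |x₁ - x₂| + |y₁ - y₂|) := by
  have hbd : ∀ t x, |σx t x| ≤ S := by
    intro t x
    have := (hσdx t x).le_of_lip' (C := S) hS (Filter.Eventually.of_forall fun y => by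
      have := hσ t x t y
      simpa using this)
    simpa using this
  have hd : ∀ θ ∈ Ioo (0 : ℝ) 1, HasDerivAt
      (fun θ => σ t (y₁ + θ * (x₁ - y₁)) - σ s (y₂ + θ * (x₂ - y₂)))
      (σx t (y₁ + θ * (x₁ - y₁)) * (x₁ - y₁) - σx s (y₂ + θ * (x₂ - y₂)) * (x₂ - y₂)) θ := by
    intro θ _
    have lin : ∀ a c : ℝ, HasDerivAt (fun θ : ℝ => a + θ * c) c θ := by
      intro a c
      simpa using ((hasDerivAt_id θ).mul_const c).const_add a
    exact ((hσdx t _).comp θ (lin _ _)).sub ((hσdx s _).comp θ (lin _ _))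
  have hcs : ∀ t, Continuous (fun y => σ t y) := fun t =>
    continuous_iff_continuousAt.2 fun x => (hσdx t x).continuousAt
  have hc : Continuous (fun θ => σ t (y₁ + θ * (x₁ - y₁)) - σ s (y₂ + θ * (x₂ - y₂))) :=
    ((hcs t).comp (by fun_prop)).sub ((hcs s).comp (by fun_prop))
  obtain ⟨θ, hθ, he⟩ := exists_hasDerivAt_eq_slope _ _ zero_lt_one hc.continuousOn hd
  have e : (σ t x₁ - σ t y₁) - (σ s x₂ - σ s y₂) =
      σx t (y₁ + θ * (x₁ - y₁)) * ((x₁ - y₁) - (x₂ - y₂)) +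
      (σx t (y₁ + θ * (x₁ - y₁)) - σx s (y₂ + θ * (x₂ - y₂))) * (x₂ - y₂) := by
    have q1 : y₁ + 1 * (x₁ - y₁) = x₁ := by ring
    have q2 : y₂ + 1 * (x₂ - y₂) = x₂ := by ring
    simp only [q1, q2, zero_mul, add_zero, sub_zero, div_one] at he
    linear_combination -he
  rw [e]
  refine (abs_add_le _ _).trans ?_
  rw [abs_mul, abs_mul]
  have h1 := hbd t (y₁ + θ * (x₁ - y₁))
  have h2 := hσ' s (y₂ + θ * (x₂ - y₂)) t (y₁ + θ * (x₁ - y₁))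
  have h3 : |y₁ + θ * (x₁ - y₁) - (y₂ + θ * (x₂ - y₂))| ≤ |x₁ - x₂| + |y₁ - y₂| := by
    have : y₁ + θ * (x₁ - y₁) - (y₂ + θ * (x₂ - y₂)) = θ * (x₁ - x₂) + (1 - θ) * (y₁ - y₂) := by
      ring
    rw [this]
    refine (abs_add_le _ _).trans ?_
    rw [abs_mul, abs_mul, abs_of_pos hθ.1, abs_of_pos (sub_pos.2 hθ.2)]
    nlinarith [abs_nonneg (x₁ - x₂), abs_nonneg (y₁ - y₂), hθ.1, hθ.2]
  have h4 : |σx t (y₁ + θ * (x₁ - y₁)) - σx s (y₂ + θ * (x₂ - y₂))| ≤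
      S * (|t - s| + |x₁ - x₂| + |y₁ - y₂|) := by
    refine h2.trans ?_
    apply mul_le_mul_of_nonneg_left _ hS
    linarith
  have h5 := mul_le_mul_of_nonneg_right h4 (abs_nonneg (x₂ - y₂))
  have h6 := mul_le_mul_of_nonneg_right h1 (abs_nonneg (x₁ - y₁ - (x₂ - y₂)))
  linarith

/-- `y` is the Picard image of `x`. -/
def IsStep (b σ : ℝ → ℝ → ℝ) (g : ℝ → ℝ) (x₀ T : ℝ) (x y : ℝ → ℝ) : Prop :=
  ∀ t ∈ Icc (0 : ℝ) T, ∃ I : ℝ, IsRSIntegral (fun τ => σ τ (x τ)) g 0 t I ∧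
    y t = x₀ + (∫ τ in (0 : ℝ)..t, b τ (x τ)) + I

lemma le_rpow_of_le {d T β : ℝ} (hd : 0 ≤ d) (hdT : d ≤ T) (hβ : 0 < β) (hβ1 : β ≤ 1) :
    d ≤ T ^ (1 - β) * d ^ β := by
  calc d = d ^ (1 - β) * d ^ β := by
        rw [← Real.rpow_add_of_nonneg hd (by linarith) hβ.le]; simp
    _ ≤ _ := by
        have := Real.rpow_le_rpow hd hdT (by linarith : 0 ≤ 1 - β)
        have := Real.rpow_nonneg hd β
        gcongr

lemma comp_holder {σ : ℝ → ℝ → ℝ} {S R T β s t : ℝ} {x : ℝ → ℝ} (hS : 0 ≤ S)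
    (hβ : 0 < β) (hβ1 : β ≤ 1) (hs : 0 ≤ s) (ht : t ≤ T)
    (hσ : ∀ t₁ x₁ t₂ x₂ : ℝ, |σ t₂ x₂ - σ t₁ x₁| ≤ S * (|t₂ - t₁| + |x₂ - x₁|))
    (hx : ∀ u ∈ Icc s t, ∀ v ∈ Icc s t, |x u - x v| ≤ R * |u - v| ^ β) :
    ∀ u ∈ Icc s t, ∀ v ∈ Icc s t,
      |σ u (x u) - σ v (x v)| ≤ S * (T ^ (1 - β) + R) * |u - v| ^ β := by
  intro u hu v hv
  have h1 := hx u hu v hv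
  have h2 : |u - v| ≤ T ^ (1 - β) * |u - v| ^ β := by
    refine le_rpow_of_le (abs_nonneg _) ?_ hβ hβ1
    rw [abs_le]; constructor <;> linarith [hu.1, hu.2, hv.1, hv.2]
  refine (hσ v (x v) u (x u)).trans ?_
  rw [mul_assoc]
  apply mul_le_mul_of_nonneg_left _ hS
  linarith

lemma WH.local_holder {T h β N s t : ℝ} {z : ℝ → ℝ} (H : WH T h β N z) (hh : 0 < h)
    (hN : 0 ≤ N) (hs : 0 ≤ s) (htT : t ≤ T) (hsh : t - s ≤ h) :
    ∀ u ∈ Icc s t, ∀ v ∈ Icc s t, |z u - z v| ≤ N * Real.exp (t / h) * |u - v| ^ β := by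
  have main : ∀ u ∈ Icc s t, ∀ v ∈ Icc s t, v ≤ u →
      |z u - z v| ≤ N * Real.exp (t / h) * |u - v| ^ β := by
    intro u hu v hv hvu
    have h1 := H v u (hs.trans hv.1) hvu (hu.2.trans htT) (by linarith [hu.2, hv.1])
    rw [abs_of_nonneg (sub_nonneg.2 hvu)]
    refine h1.trans ?_
    have h2 : 0 ≤ (u - v) ^ β := Real.rpow_nonneg (by linarith) _
    have h3 : Real.exp (u / h) ≤ Real.exp (t / h) := by
      have := hu.2
      gcongr
    gcongr
  intro u hu v hv
  rcases le_total v u with h | h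
  · exact main u hu v hv h
  · rw [abs_sub_comm, abs_sub_comm u]; exact main v hv u hu h

lemma picard_step {b σ : ℝ → ℝ → ℝ} {g : ℝ → ℝ} {γ β G B S T : ℝ} (x₀ : ℝ)
    (hG : 0 ≤ G) (hB : 0 ≤ B) (hS : 0 ≤ S) (hT : 0 < T)
    (hβ : 0 < β) (hβγ : β < γ) (hγ1 : γ ≤ 1) (hθ : 1 < β + γ)
    (hg : ∀ x y : ℝ, |g x - g y| ≤ G * |x - y| ^ γ)
    (hb : ∀ t₁ x₁ t₂ x₂ : ℝ, |b t₂ x₂ - b t₁ x₁| ≤ B * (|t₂ - t₁| + |x₂ - x₁|))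
    (hσ : ∀ t₁ x₁ t₂ x₂ : ℝ, |σ t₂ x₂ - σ t₁ x₁| ≤ S * (|t₂ - t₁| + |x₂ - x₁|)) :
    ∃ h, 0 < h ∧ h ≤ 1 ∧ ∀ x : ℝ → ℝ, x 0 = x₀ ∧ WH T h β 1 x →
      ∃ y : ℝ → ℝ, (y 0 = x₀ ∧ WH T h β 1 y) ∧ IsStep b σ g x₀ T x y := by
  set L := T ^ (1 - β)
  have hL : 0 ≤ L := Real.rpow_nonneg hT.le _
  have hC := youngC_pos hθ
  set M := (|b 0 x₀| + B * T + 2 * B) + (|σ 0 x₀| + S * T + 2 * S) * G +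
    youngC (β + γ) * (S * (L + 1) * G) with hM
  obtain ⟨h, hh, hh1, hhM⟩ := exists_small (e := γ - β) (by linarith) M one_pos one_pos
  refine ⟨h, hh, hh1, ?_⟩
  rintro x ⟨hx0, hx⟩
  have hH := hx.holder hh hh1 hβ zero_le_one
  set R := 4 * 1 * Real.exp (T / h) / h ^ β with hR
  have hR0 : 0 ≤ R := by positivity
  have hfH := comp_holder (s := 0) (t := T) (T := T) hS hβ (by linarith) le_rfl le_rfl hσ hH
  have hbc := lip_cont hb (holder_cont_s6 hβ hH)
  obtain ⟨J, hJ0, hJ1, -⟩ := young_main (f := fun τ => σ τ (x τ)) (by positivity) hG hβ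
    (hβ.trans hβγ) hθ hT hg hfH
  have hstep : IsStep b σ g x₀ T x (fun t => x₀ + (∫ τ in (0 : ℝ)..t, b τ (x τ)) + J t) :=
    fun t ht => ⟨J t, hJ1 t ht, rfl⟩
  refine ⟨_, ⟨by simp [hJ0], ?_⟩, hstep⟩
  intro s t hs hst htT hsh
  set w := Real.exp (t / h) with hw
  have hw1 : 1 ≤ w := Real.one_le_exp (div_nonneg (hs.trans hst) hh.le)
  have lin : ∀ (a : ℝ → ℝ → ℝ) (A : ℝ), 0 ≤ A →
      (∀ t₁ x₁ t₂ x₂ : ℝ, |a t₂ x₂ - a t₁ x₁| ≤ A * (|t₂ - t₁| + |x₂ - x₁|)) →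
      ∀ u ∈ Icc s t, |a u (x u)| ≤ (|a 0 x₀| + A * T + 2 * A) * w := by
    intro a A hA ha u hu
    have u0 := hs.trans hu.1
    have h1 := ha 0 x₀ u (x u)
    have h2 := hx.sup hh hh1 hβ zero_le_one u0 (hu.2.trans htT)
    rw [hx0] at h2
    have h3 : Real.exp (u / h) ≤ w := by
      have := hu.2
      rw [hw]; gcongr
    have h4 : |u - 0| ≤ T := by rw [sub_zero, abs_of_nonneg u0]; linarith [hu.2]
    have h5 : |u - 0| + |x u - x₀| ≤ T + 2 * w := by linarith
    have h6 := mul_le_mul_of_nonneg_left h5 hA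
    have h7 : |a u (x u)| ≤ |a 0 x₀| + |a u (x u) - a 0 x₀| := by
      have := abs_add_le (a 0 x₀) (a u (x u) - a 0 x₀)
      simpa using this
    have h8 : |a 0 x₀| + A * T ≤ (|a 0 x₀| + A * T) * w :=
      le_mul_of_one_le_right (by positivity) hw1
    linarith
  have hloc := comp_holder (T := T) hS hβ (by linarith) hs htT hσ
    (hx.local_holder hh zero_le_one hs htT hsh)
  have := inc_est (K' := S * (L + 1) * w) (by positivity) hG hβ hβγ hγ1 hθ hT hh1 hg hfH hbc hstep
    hs hst htT hsh (lin b B hB hb) (lin σ S hS hσ s ⟨le_rfl, hst⟩) (by positivity)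
    (fun u hu v hv => (hloc u hu v hv).trans (by
      have : L + 1 * w ≤ (L + 1) * w := by nlinarith
      refine mul_le_mul_of_nonneg_right ?_ (by positivity)
      rw [mul_assoc S]
      exact mul_le_mul_of_nonneg_left this hS))
  refine this.trans ?_
  have hp : 0 ≤ (t - s) ^ β := Real.rpow_nonneg (by linarith) _
  apply mul_le_mul_of_nonneg_right _ hp
  have h9 := mul_le_mul_of_nonneg_right hhM (zero_le_one.trans hw1)
  refine le_trans (le_of_eq ?_) h9
  rw [hM]; ring

lemma contract {b σ σx : ℝ → ℝ → ℝ} {g : ℝ → ℝ} {γ β G B S T R h₀ : ℝ} (x₀ : ℝ)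
    (hG : 0 ≤ G) (hB : 0 ≤ B) (hS : 0 ≤ S) (hT : 0 < T) (hR : 0 ≤ R) (hh₀ : 0 < h₀)
    (hβ : 0 < β) (hβγ : β < γ) (hγ1 : γ ≤ 1) (hθ : 1 < β + γ)
    (hg : ∀ x y : ℝ, |g x - g y| ≤ G * |x - y| ^ γ)
    (hb : ∀ t₁ x₁ t₂ x₂ : ℝ, |b t₂ x₂ - b t₁ x₁| ≤ B * (|t₂ - t₁| + |x₂ - x₁|))
    (hσ : ∀ t₁ x₁ t₂ x₂ : ℝ, |σ t₂ x₂ - σ t₁ x₁| ≤ S * (|t₂ - t₁| + |x₂ - x₁|))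
    (hσdx : ∀ t x : ℝ, HasDerivAt (fun y => σ t y) (σx t x) x)
    (hσ' : ∀ t₁ x₁ t₂ x₂ : ℝ, |σx t₂ x₂ - σx t₁ x₁| ≤ S * (|t₂ - t₁| + |x₂ - x₁|)) :
    ∃ h, 0 < h ∧ h ≤ 1 ∧ h ≤ h₀ ∧ ∀ (x y p q : ℝ → ℝ) (N : ℝ), 0 ≤ N → x 0 = y 0 →
      (∀ u ∈ Icc 0 T, ∀ v ∈ Icc 0 T, |x u - x v| ≤ R * |u - v| ^ β) →
      (∀ u ∈ Icc 0 T, ∀ v ∈ Icc 0 T, |y u - y v| ≤ R * |u - v| ^ β) →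
      IsStep b σ g x₀ T x p → IsStep b σ g x₀ T y q →
      WH T h β N (fun t => x t - y t) → WH T h β (N / 2) (fun t => p t - q t) := by
  set L := T ^ (1 - β)
  have hL : 0 ≤ L := Real.rpow_nonneg hT.le _
  have hC := youngC_pos hθ
  set M := 2 * B + 2 * S * G + youngC (β + γ) * ((S + 2 * S * (L + R + R)) * G) with hM
  obtain ⟨h, hh, hh1, hhM⟩ := exists_small (e := γ - β) (by linarith) M
    (by norm_num : (0 : ℝ) < 1 / 2) (lt_min hh₀ one_pos)
  refine ⟨h, hh, hh1.trans (min_le_right _ _), hh1.trans (min_le_left _ _), ?_⟩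
  replace hh1 := hh1.trans (min_le_right _ _)
  intro x y p q N hN h0 hx hy hp hq hz
  have hbx := lip_cont hb (holder_cont_s6 hβ hx)
  have hby := lip_cont hb (holder_cont_s6 hβ hy)
  have hfx := comp_holder (s := 0) (t := T) (T := T) hS hβ (by linarith) le_rfl le_rfl hσ hx
  have hfy := comp_holder (s := 0) (t := T) (T := T) hS hβ (by linarith) le_rfl le_rfl hσ hy
  have hF : ∀ u ∈ Icc 0 T, ∀ v ∈ Icc 0 T,
      |(fun τ => σ τ (x τ) - σ τ (y τ)) u - (fun τ => σ τ (x τ) - σ τ (y τ)) v| ≤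
        (2 * (S * (L + R))) * |u - v| ^ β := by
    intro u hu v hv
    have h1 := hfx u hu v hv
    have h2 := hfy u hu v hv
    dsimp only
    rw [abs_le] at *
    constructor <;> linarith [h1.1, h1.2, h2.1, h2.2]
  have hpq : ∀ t ∈ Icc 0 T, ∃ I, IsRSIntegral (fun τ => σ τ (x τ) - σ τ (y τ)) g 0 t I ∧
      (fun t => p t - q t) t = 0 + (∫ τ in (0 : ℝ)..t, (fun τ => b τ (x τ) - b τ (y τ)) τ) + I := by
    intro t ht
    obtain ⟨I, i1, i2⟩ := hp t ht
    obtain ⟨I', i1', i2'⟩ := hq t ht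
    refine ⟨I - I', rs_sub i1 i1', ?_⟩
    have sub : uIcc 0 t ⊆ Icc 0 T := by rw [uIcc_of_le ht.1]; exact Icc_subset_Icc_right ht.2
    dsimp only
    rw [intervalIntegral.integral_sub (hbx.mono sub).intervalIntegrable
      (hby.mono sub).intervalIntegrable, i2, i2']
    ring
  intro s t hs hst htT hsh
  set w := Real.exp (t / h) with hw
  have hw0 : 0 < w := Real.exp_pos _
  have hzs : ∀ u ∈ Icc s t, |x u - y u| ≤ 2 * N * w := by
    intro u hu
    have h1 := hz.sup hh hh1 hβ hN (hs.trans hu.1) (hu.2.trans htT)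
    simp only [h0, sub_self, sub_zero] at h1
    refine h1.trans ?_
    have h3 : Real.exp (u / h) ≤ w := by
      have := hu.2
      rw [hw]; gcongr
    gcongr
  have lin : ∀ (a : ℝ → ℝ → ℝ) (A : ℝ), 0 ≤ A →
      (∀ t₁ x₁ t₂ x₂ : ℝ, |a t₂ x₂ - a t₁ x₁| ≤ A * (|t₂ - t₁| + |x₂ - x₁|)) →
      ∀ u ∈ Icc s t, |a u (x u) - a u (y u)| ≤ A * (2 * N * w) := by
    intro a A hA ha u hu
    have h1 := ha u (y u) u (x u)
    rw [sub_self, abs_zero, zero_add] at h1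
    exact h1.trans (mul_le_mul_of_nonneg_left (hzs u hu) hA)
  have hloc := hz.local_holder hh hN hs htT hsh
  have hFloc : ∀ u ∈ Icc s t, ∀ v ∈ Icc s t,
      |(fun τ => σ τ (x τ) - σ τ (y τ)) u - (fun τ => σ τ (x τ) - σ τ (y τ)) v| ≤
        ((S + 2 * S * (L + R + R)) * (N * w)) * |u - v| ^ β := by
    intro u hu v hv
    have uT : u ∈ Icc 0 T := ⟨hs.trans hu.1, hu.2.trans htT⟩
    have vT : v ∈ Icc 0 T := ⟨hs.trans hv.1, hv.2.trans htT⟩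
    have h1 := four_point hS hσdx hσ hσ' u v (x u) (y u) (x v) (y v)
    have h2 := hloc u hu v hv
    have h3 := hzs v hv
    have h4 : |u - v| ≤ L * |u - v| ^ β := by
      refine le_rpow_of_le (abs_nonneg _) ?_ hβ (by linarith)
      rw [abs_le]; constructor <;> linarith [uT.1, uT.2, vT.1, vT.2]
    have h5 : |u - v| + |x u - x v| + |y u - y v| ≤ (L + R + R) * |u - v| ^ β := by
      linarith [hx u uT v vT, hy u uT v vT]
    refine h1.trans ?_
    calc _ ≤ S * (N * w * |u - v| ^ β) + S * (2 * N * w) * ((L + R + R) * |u - v| ^ β) := by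
          gcongr
      _ = _ := by ring
  have := inc_est (by positivity) hG hβ hβγ hγ1 hθ hT hh1 hg hF (hbx.sub hby) hpq
    hs hst htT hsh (lin b B hB hb) (lin σ S hS hσ s ⟨le_rfl, hst⟩) (by positivity) hFloc
  refine this.trans ?_
  have hp : 0 ≤ (t - s) ^ β := Real.rpow_nonneg (by linarith) _
  apply mul_le_mul_of_nonneg_right _ hp
  have h9 := mul_le_mul_of_nonneg_right hhM (mul_nonneg hN hw0.le)
  refine le_trans (le_of_eq ?_) (h9.trans (le_of_eq ?_))
  · rw [hM]; ring
  · ring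

lemma WH_of_holder {T h β N : ℝ} {z : ℝ → ℝ} (hh : 0 < h) (hN : 0 ≤ N)
    (hz : ∀ u ∈ Icc 0 T, ∀ v ∈ Icc 0 T, |z u - z v| ≤ N * |u - v| ^ β) : WH T h β N z := by
  intro s t hs hst htT _
  have h1 := hz t ⟨hs.trans hst, htT⟩ s ⟨hs, hst.trans htT⟩
  rw [abs_of_nonneg (sub_nonneg.2 hst)] at h1
  refine h1.trans ?_
  have hp : 0 ≤ (t - s) ^ β := Real.rpow_nonneg (by linarith) _
  apply mul_le_mul_of_nonneg_right _ hp
  exact le_mul_of_one_le_right hN (Real.one_le_exp (div_nonneg (hs.trans hst) hh.le))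

lemma step_zero {b σ : ℝ → ℝ → ℝ} {g x y : ℝ → ℝ} {x₀ T : ℝ} (hT : 0 < T)
    (h : IsStep b σ g x₀ T x y) : y 0 = x₀ := by
  obtain ⟨I, h1, h2⟩ := h 0 ⟨le_rfl, hT.le⟩
  have h3 : IsRSIntegral (fun τ => σ τ (x τ)) g 0 0 0 := by
    intro ε hε
    refine ⟨1, one_pos, ?_⟩
    intro n t hm h0 hl _
    have hc : ∀ i, t i = 0 := fun i =>
      le_antisymm (hl ▸ hm (Fin.le_last i)) (h0 ▸ hm (Fin.zero_le i))
    simp [RSsum, hc, hε]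
  rw [h2, rs_unique le_rfl h1 h3]
  simp

/-- Existence and uniqueness for the ODE with `γ`-Hölder forcing, `1/2 < γ ≤ 1`,
`1 − γ < β < γ`: Lipschitz drift `b`, and `C¹` diffusion `σ` with `σ`, `σ'_t`,
`σ'_x` globally Lipschitz. -/
theorem ode_holder_forcing_existence_uniqueness
    (b σ σt σx : ℝ → ℝ → ℝ) (g : ℝ → ℝ) (γ Cg x₀ : ℝ)
    (hγ : 1 / 2 < γ) (hγ1 : γ ≤ 1)
    (hg : ∀ x y : ℝ, |g x - g y| ≤ Cg * |x - y| ^ γ)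
    (hb : ∃ B : ℝ, ∀ t₁ x₁ t₂ x₂ : ℝ,
      |b t₂ x₂ - b t₁ x₁| ≤ B * (|t₂ - t₁| + |x₂ - x₁|))
    (hσdt : ∀ t x : ℝ, HasDerivAt (fun s => σ s x) (σt t x) t)
    (hσdx : ∀ t x : ℝ, HasDerivAt (fun y => σ t y) (σx t x) x)
    (hσtc : Continuous fun p : ℝ × ℝ => σt p.1 p.2)
    (hσxc : Continuous fun p : ℝ × ℝ => σx p.1 p.2)
    (hσ : ∃ S : ℝ, ∀ t₁ x₁ t₂ x₂ : ℝ,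
      |σ t₂ x₂ - σ t₁ x₁| ≤ S * (|t₂ - t₁| + |x₂ - x₁|) ∧
      |σt t₂ x₂ - σt t₁ x₁| ≤ S * (|t₂ - t₁| + |x₂ - x₁|) ∧
      |σx t₂ x₂ - σx t₁ x₁| ≤ S * (|t₂ - t₁| + |x₂ - x₁|)) :
    ∀ T > (0 : ℝ), ∀ β : ℝ, 1 - γ < β → β < γ →
      (∃ x : ℝ → ℝ, IsSolution b σ g x₀ T β x) ∧
      (∀ x y : ℝ → ℝ, IsSolution b σ g x₀ T β x → IsSolution b σ g x₀ T β y →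
        EqOn x y (Icc 0 T)) := by
  intro T hT β hβ1 hβγ
  obtain ⟨B, hb⟩ := hb
  obtain ⟨S, hS3⟩ := hσ
  have hσ := fun t₁ x₁ t₂ x₂ => (hS3 t₁ x₁ t₂ x₂).1
  have hσ' := fun t₁ x₁ t₂ x₂ => (hS3 t₁ x₁ t₂ x₂).2.2
  have hβ : 0 < β := by linarith
  have hθ : 1 < β + γ := by linarith
  have hG : 0 ≤ Cg := by
    have := (abs_nonneg _).trans (hg 1 0)
    simpa using this
  have hB : 0 ≤ B := by
    have := (abs_nonneg _).trans (hb 0 0 1 0)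
    simpa using this
  have hS : 0 ≤ S := by
    have := (abs_nonneg _).trans (hσ 0 0 1 0)
    simpa using this
  refine ⟨?_, ?_⟩
  · -- existence
    obtain ⟨h₀, hh₀, hh₀1, hstep⟩ := picard_step x₀ hG hB hS hT hβ hβγ hγ1 hθ hg hb hσ
    set R := 4 * 1 * Real.exp (T / h₀) / h₀ ^ β with hR
    have hR0 : 0 ≤ R := by positivity
    obtain ⟨h, hh, hh1, hhh₀, hcon⟩ :=
      contract x₀ hG hB hS hT hR0 hh₀ hβ hβγ hγ1 hθ hg hb hσ hσdx hσ'
    choose! Φ hΦ1 hΦ2 using hstep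
    let X : ℕ → ℝ → ℝ := fun n => Φ^[n] (fun _ => x₀)
    have hXs : ∀ n, X (n + 1) = Φ (X n) := fun n => Function.iterate_succ_apply' _ _ _
    have hX : ∀ n, X n 0 = x₀ ∧ WH T h₀ β 1 (X n) := by
      intro n
      induction n with
      | zero =>
        refine ⟨rfl, ?_⟩
        intro s t hs hst htT _
        have hp : 0 ≤ (t - s) ^ β := Real.rpow_nonneg (by linarith) _
        simp only [X, Function.iterate_zero, id, sub_self, abs_zero]
        positivity
      | succ n ih => rw [hXs]; exact hΦ1 _ ih
    have hXH : ∀ n, ∀ u ∈ Icc 0 T, ∀ v ∈ Icc 0 T, |X n u - X n v| ≤ R * |u - v| ^ β :=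
      fun n => (hX n).2.holder hh₀ hh₀1 hβ zero_le_one
    have hXstep : ∀ n, IsStep b σ g x₀ T (X n) (X (n + 1)) := by
      intro n; rw [hXs]; exact hΦ2 _ (hX n)
    have hdiff : ∀ n, WH T h β (2 * R / 2 ^ n) (fun t => X (n + 1) t - X n t) := by
      intro n
      induction n with
      | zero =>
        apply WH_of_holder hh (by positivity)
        intro u hu v hv
        have h1 := hXH 0 u hu v hv
        have h2 := hXH 1 u hu v hv
        simp only [zero_add, pow_zero, div_one]
        rw [abs_le] at *
        constructor <;> linarith [h1.1, h1.2, h2.1, h2.2]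
      | succ n ih =>
        have := hcon _ _ _ _ _ (by positivity) ((hX (n + 1)).1.trans (hX n).1.symm)
          (hXH _) (hXH _) (hXstep (n + 1)) (hXstep n) ih
        have e : 2 * R / 2 ^ (n + 1) = 2 * R / 2 ^ n / 2 := by rw [pow_succ]; field_simp
        rw [e]; exact this
    have hlim : ∀ t, ∃ l, t ∈ Icc 0 T → Filter.Tendsto (fun n => X n t) Filter.atTop (nhds l) := by
      intro t
      by_cases ht : t ∈ Icc 0 T
      swap
      · exact ⟨0, fun h => absurd h ht⟩
      have hc : CauchySeq (fun n => X n t) := by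
        apply cauchySeq_of_le_geometric_two (C := 2 * (2 * (2 * R) * Real.exp (t / h)))
        intro n
        have := (hdiff n).sup hh hh1 hβ (by positivity) ht.1 ht.2
        simp only [(hX _).1, sub_self, sub_zero] at this
        rw [dist_comm, Real.dist_eq]
        refine this.trans (le_of_eq ?_)
        field_simp
      obtain ⟨l, hl⟩ := cauchySeq_tendsto_of_complete hc
      exact ⟨l, fun _ => hl⟩
    choose x hx using hlim
    have hxH : ∀ u ∈ Icc 0 T, ∀ v ∈ Icc 0 T, |x u - x v| ≤ R * |u - v| ^ β := by
      intro u hu v hv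
      exact le_of_tendsto' ((hx u hu).sub (hx v hv)).abs (fun n => hXH n u hu v hv)
    have h0m : (0 : ℝ) ∈ Icc 0 T := ⟨le_rfl, hT.le⟩
    have hx0 : x 0 = x₀ := by
      refine tendsto_nhds_unique (hx 0 h0m) ?_
      simp only [(hX _).1]
      exact tendsto_const_nhds
    have hxd : ∀ n, WH T h β (4 * R / 2 ^ n) (fun t => X n t - x t) := by
      intro n s t hs hst htT hsh
      have ht : t ∈ Icc 0 T := ⟨hs.trans hst, htT⟩
      have hs' : s ∈ Icc 0 T := ⟨hs, hst.trans htT⟩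
      have hp : 0 ≤ (t - s) ^ β := Real.rpow_nonneg (by linarith) _
      have := dist_le_of_le_geometric_two_of_tendsto
        (C := 2 * (2 * R * Real.exp (t / h) * (t - s) ^ β))
        (f := fun n => X n t - X n s) (a := x t - x s)
        (by
          intro m
          have := hdiff m s t hs hst htT hsh
          rw [dist_comm, Real.dist_eq]
          have e : X (m + 1) t - X (m + 1) s - (X m t - X m s) =
            X (m + 1) t - X m t - (X (m + 1) s - X m s) := by ring
          rw [e]
          refine this.trans (le_of_eq ?_)
          field_simp)
        ((hx t ht).sub (hx s hs')) n
      rw [Real.dist_eq] at this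
      have e : X n t - X n s - (x t - x s) = X n t - x t - (X n s - x s) := by ring
      rw [e] at this
      refine this.trans (le_of_eq ?_)
      field_simp
      ring
    -- the Picard image of the limit
    have hfx := comp_holder (s := 0) (t := T) (T := T) hS hβ (by linarith) le_rfl le_rfl hσ hxH
    have hL : 0 ≤ T ^ (1 - β) := Real.rpow_nonneg hT.le _
    obtain ⟨J, hJ0, hJ1, -⟩ := young_main (f := fun τ => σ τ (x τ)) (by positivity) hG hβ
      (hβ.trans hβγ) hθ hT hg hfx
    have hst : IsStep b σ g x₀ T x (fun t => x₀ + (∫ τ in (0 : ℝ)..t, b τ (x τ)) + J t) :=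
      fun t ht => ⟨J t, hJ1 t ht, rfl⟩
    set y : ℝ → ℝ := fun t => x₀ + (∫ τ in (0 : ℝ)..t, b τ (x τ)) + J t with hy
    have hy0 := step_zero hT hst
    have hxy : ∀ t ∈ Icc 0 T, x t = y t := by
      intro t ht
      refine tendsto_nhds_unique ((hx t ht).comp (Filter.tendsto_add_atTop_nat 1)) ?_
      rw [tendsto_iff_dist_tendsto_zero]
      have hb : ∀ n, dist (X (n + 1) t) (y t) ≤ (4 * R * Real.exp (t / h)) * (1 / 2) ^ n := by
        intro n
        have h1 := hcon _ _ _ _ _ (by positivity) ((hX n).1.trans hx0.symm) (hXH n) hxH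
          (hXstep n) hst (hxd n)
        have h2 := h1.sup hh hh1 hβ (by positivity) ht.1 ht.2
        simp only [(hX _).1, hy0, sub_self, sub_zero] at h2
        rw [Real.dist_eq]
        refine h2.trans (le_of_eq ?_)
        rw [one_div, inv_pow]
        field_simp
      refine squeeze_zero (fun n => dist_nonneg) hb ?_
      have := (tendsto_pow_atTop_nhds_zero_of_lt_one (r := (1 / 2 : ℝ)) (by norm_num)
        (by norm_num)).const_mul (4 * R * Real.exp (t / h))
      rwa [mul_zero] at this
    refine ⟨x, ⟨R, fun t₁ h₁ t₂ h₂ => hxH t₂ h₂ t₁ h₁⟩, ?_⟩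
    intro t ht
    exact ⟨J t, hJ1 t ht, hxy t ht⟩
  · -- uniqueness
    rintro x y ⟨⟨C₁, hx⟩, hxs⟩ ⟨⟨C₂, hy⟩, hys⟩
    set R := max 0 (max C₁ C₂) with hR
    have hR0 : 0 ≤ R := le_max_left _ _
    have hxH : ∀ u ∈ Icc 0 T, ∀ v ∈ Icc 0 T, |x u - x v| ≤ R * |u - v| ^ β := by
      intro u hu v hv
      refine (hx v hv u hu).trans (mul_le_mul_of_nonneg_right ?_ (by positivity))
      exact (le_max_left _ _).trans (le_max_right _ _)
    have hyH : ∀ u ∈ Icc 0 T, ∀ v ∈ Icc 0 T, |y u - y v| ≤ R * |u - v| ^ β := by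
      intro u hu v hv
      refine (hy v hv u hu).trans (mul_le_mul_of_nonneg_right ?_ (by positivity))
      exact (le_max_right _ _).trans (le_max_right _ _)
    obtain ⟨h, hh, hh1, -, hcon⟩ :=
      contract x₀ hG hB hS hT hR0 one_pos hβ hβγ hγ1 hθ hg hb hσ hσdx hσ'
    have hx0 := step_zero hT hxs
    have hy0 := step_zero hT hys
    have hd : ∀ n : ℕ, WH T h β (2 * R / 2 ^ n) (fun t => x t - y t) := by
      intro n
      induction n with
      | zero =>
        apply WH_of_holder hh (by positivity)
        intro u hu v hv
        have h1 := hxH u hu v hv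
        have h2 := hyH u hu v hv
        simp only [pow_zero, div_one]
        rw [abs_le] at *
        constructor <;> linarith [h1.1, h1.2, h2.1, h2.2]
      | succ n ih =>
        have := hcon _ _ _ _ _ (by positivity) (hx0.trans hy0.symm) hxH hyH hxs hys ih
        have e : 2 * R / 2 ^ (n + 1) = 2 * R / 2 ^ n / 2 := by rw [pow_succ]; field_simp
        rw [e]; exact this
    intro t ht
    have hb : ∀ n : ℕ, |x t - y t| ≤ (4 * R * Real.exp (t / h)) * (1 / 2) ^ n := by
      intro n
      have h2 := (hd n).sup hh hh1 hβ (by positivity) ht.1 ht.2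
      simp only [hx0, hy0, sub_self, sub_zero] at h2
      refine h2.trans (le_of_eq ?_)
      rw [one_div, inv_pow]
      field_simp
      ring
    have hl := (tendsto_pow_atTop_nhds_zero_of_lt_one (r := (1 / 2 : ℝ)) (by norm_num)
      (by norm_num)).const_mul (4 * R * Real.exp (t / h))
    rw [mul_zero] at hl
    have := ge_of_tendsto' hl hb
    exact sub_eq_zero.1 (abs_eq_zero.1 (le_antisymm this (abs_nonneg _)))
end

section
/- Let 1/2 < γ < 1, β > 1 − γ, T > 0, f ∈ C^β([0,T]), g ∈ C^γ([0,T]), e continuous, and u : [0,∞) × ℝ → ℝ with continuous ∂u/∂t and twice differentiable in x with bounded second derivative. Define η(t) = η(0) + ∫₀ᵗ e(s) ds + ∫₀ᵗ f(s) dg(s) (Young integral). Then v(t) = u(t, η(t)) satisfies the change of variables formula v(t) − v(0) = ∫₀ᵗ ∂u/∂t(s, η(s)) ds + ∫₀ᵗ ∂u/∂x(s, η(s)) dη(s), i.e. = ∫₀ᵗ [∂u/∂t(s,η(s)) + ∂u/∂x(s,η(s)) e(s)] ds + ∫₀ᵗ ∂u/∂x(s,η(s)) f(s) dg(s), with no second-order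 correction term. -/
open Set Finset intervalIntegral

/-- Second-order Taylor bound. -/
lemma cvy_taylor (F dF ddF : ℝ → ℝ) (M : ℝ) (h1 : ∀ x, HasDerivAt F (dF x) x)
    (h2 : ∀ x, HasDerivAt dF (ddF x) x) (hM : ∀ x, |ddF x| ≤ M) (x y : ℝ) :
    |F y - F x - dF x * (y - x)| ≤ M * |y - x| ^ 2 := by
  have hM0 : 0 ≤ M := (abs_nonneg _).trans (hM 0)
  have hlip : ∀ a b, |dF b - dF a| ≤ M * |b - a| := fun a b =>
    Convex.norm_image_sub_le_of_norm_hasDerivWithin_le (s := Set.univ) (f := dF) (f' := ddF)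
      (fun z _ => (h2 z).hasDerivWithinAt) (fun z _ => hM z) convex_univ (Set.mem_univ a) (Set.mem_univ b)
  have := Convex.norm_image_sub_le_of_norm_hasDerivWithin_le (s := Set.uIcc x y)
    (f := fun z => F z - dF x * z) (f' := fun z => dF z - dF x * 1) (C := M * |y - x|)
    (fun z _ => ((h1 z).sub ((hasDerivAt_id' z).const_mul (dF x))).hasDerivWithinAt)
    (fun z hz => by
      rw [mul_one]
      refine (hlip x z).trans ?_
      refine mul_le_mul_of_nonneg_left ?_ hM0
      exact Set.abs_sub_left_of_mem_uIcc hz) (convex_uIcc x y) Set.left_mem_uIcc Set.right_mem_uIcc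
  simp only [Real.norm_eq_abs] at this
  calc _ = |F y - dF x * y - (F x - dF x * x)| := by congr 1; ring
    _ ≤ _ := this
    _ = _ := by ring

lemma cvy_ux_cont (u ut ux uxx : ℝ → ℝ → ℝ) (M : ℝ)
    (hut : ∀ t x : ℝ, HasDerivAt (fun s => u s x) (ut t x) t)
    (hux : ∀ t x : ℝ, HasDerivAt (fun y => u t y) (ux t x) x)
    (huxx : ∀ t x : ℝ, HasDerivAt (fun y => ux t y) (uxx t x) x)
    (huxxM : ∀ t x : ℝ, |uxx t x| ≤ M) : Continuous fun p : ℝ × ℝ => ux p.1 p.2 := by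
  have hM0 : 0 ≤ M := (abs_nonneg _).trans (huxxM 0 0)
  have hct : ∀ x, Continuous fun t => ux t x := by
    intro x
    rw [continuous_iff_continuousAt]
    intro t0
    rw [Metric.continuousAt_iff]
    intro ε hε
    set h : ℝ := ε / (4 * (M + 1)) with hh
    have hpos : 0 < h := by positivity
    have hMh : 2 * M * h ≤ ε / 2 := by
      rw [hh]
      have : 2 * M * (ε / (4 * (M + 1))) = ε / 2 * (M / (M + 1)) := by field_simp; ring
      rw [this]
      have : M / (M + 1) ≤ 1 := by rw [div_le_one (by positivity)]; linarith
      nlinarith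
    have hc : ∀ z, ContinuousAt (fun s => u s z) t0 := fun z => (hut t0 z).continuousAt
    obtain ⟨d1, hd1, H1⟩ := Metric.continuousAt_iff.1 (hc (x + h)) (ε * h / 4) (by positivity)
    obtain ⟨d2, hd2, H2⟩ := Metric.continuousAt_iff.1 (hc x) (ε * h / 4) (by positivity)
    refine ⟨min d1 d2, lt_min hd1 hd2, fun {t} ht => ?_⟩
    have A1 := H1 (ht.trans_le (min_le_left _ _))
    have A2 := H2 (ht.trans_le (min_le_right _ _))
    have B1 := cvy_taylor _ _ _ M (hux t) (huxx t) (huxxM t) x (x + h)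
    have B2 := cvy_taylor _ _ _ M (hux t0) (huxx t0) (huxxM t0) x (x + h)
    rw [Real.dist_eq] at A1 A2 ⊢
    simp only [add_sub_cancel_left, sq_abs] at B1 B2
    have key : |ux t x - ux t0 x| * h < ε * h := by
      rw [← abs_of_pos hpos, ← abs_mul, abs_of_pos hpos]
      rw [abs_lt] at A1 A2 ⊢
      rw [abs_le] at B1 B2
      have : 2 * (M * h ^ 2) ≤ ε / 2 * h := by nlinarith
      constructor <;> nlinarith
    exact lt_of_mul_lt_mul_right key hpos.le
  have hl : ∀ t, LipschitzWith (Real.toNNReal M) (fun z => ux t z) := by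
    intro t
    refine lipschitzWith_of_nnnorm_deriv_le (fun z => (huxx t z).differentiableAt) (fun z => ?_)
    rw [(huxx t z).deriv, ← NNReal.coe_le_coe, Real.coe_toNNReal _ hM0]
    exact huxxM t z
  have := continuous_prod_of_continuous_lipschitzWith (fun p : ℝ × ℝ => ux p.2 p.1)
    (Real.toNNReal M) (fun x => hct x) (fun t => hl t)
  exact this.comp continuous_swap

/-- Sums over `Fin`-indexed partitions as sums over `ℕ`-indexed ones. -/
lemma cvy_rs_nat {f g : ℝ → ℝ} {a b I : ℝ} (h : IsRSIntegral f g a b I) :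
    ∀ ε > 0, ∃ δ > 0, ∀ (n : ℕ) (p : ℕ → ℝ), Monotone p → p 0 = a → p n = b →
      (∀ i < n, p (i + 1) - p i < δ) →
      |∑ i ∈ Finset.range n, f (p i) * (g (p (i + 1)) - g (p i)) - I| < ε := by
  intro ε hε
  obtain ⟨δ, hδ, H⟩ := h ε hε
  refine ⟨δ, hδ, fun n p hp h0 hn hs => ?_⟩
  have := H n (fun i => p i) (fun i j hij => hp hij) (by simpa using h0) (by simpa using hn)
    (fun i => by simpa using hs i i.2)
  rw [RSsum] at this
  simpa [← Fin.sum_univ_eq_sum_range (fun i => f (p i) * (g (p (i + 1)) - g (p i)))] using this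

/-- A locally almost-additive approximation gives the integral. -/
lemma cvy_sew (h g Φ : ℝ → ℝ) (τ : ℝ) (hτ : 0 ≤ τ)
    (H : ∀ ε > 0, ∃ δ > 0, ∀ a b, 0 ≤ a → a ≤ b → b ≤ τ → b - a < δ →
      |h a * (g b - g a) - (Φ b - Φ a)| ≤ ε * (b - a)) :
    IsRSIntegral h g 0 τ (Φ τ - Φ 0) := by
  intro ε hε
  obtain ⟨δ, hδ, H⟩ := H (ε / (τ + 1)) (by positivity)
  refine ⟨δ, hδ, fun n t ht h0 hn hs => ?_⟩
  have tel : ∀ F : ℝ → ℝ, ∑ i : Fin n, (F (t i.succ) - F (t i.castSucc)) = F τ - F 0 := by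
    intro F
    set p : ℕ → ℝ := fun i => t ⟨min i n, by omega⟩ with hp
    have e1 : ∀ i : Fin n, F (t i.succ) - F (t i.castSucc) = F (p (i + 1)) - F (p i) := by
      intro i
      have := i.2
      have a1 : t i.succ = p (i + 1) := by
        simp only [hp]; congr 1; try (ext; simp; try omega)
      have a2 : t i.castSucc = p i := by
        simp only [hp]; congr 1; try (ext; simp; try omega)
      rw [a1, a2]
    rw [Finset.sum_congr rfl (fun i _ => e1 i),
      Fin.sum_univ_eq_sum_range (fun i => F (p (i + 1)) - F (p i)) n,
      Finset.sum_range_sub (fun i => F (p i))]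
    have a3 : p n = τ := by rw [← hn]; simp only [hp]; congr 1; try (ext; simp)
    have a4 : p 0 = 0 := by rw [← h0]; simp only [hp]; congr 1; try (ext; simp)
    rw [a3, a4]
  rw [RSsum, ← tel Φ, ← Finset.sum_sub_distrib]
  calc _ ≤ ∑ i : Fin n, ε / (τ + 1) * (t i.succ - t i.castSucc) := by
        refine (Finset.abs_sum_le_sum_abs _ _).trans (Finset.sum_le_sum fun i _ => ?_)
        refine H _ _ ?_ (ht (Fin.castSucc_lt_succ).le) ?_ (hs i)
        · rw [← h0]; exact ht (Fin.zero_le _)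
        · rw [← hn]; exact ht (Fin.le_last _)
    _ = ε / (τ + 1) * τ := by rw [← Finset.mul_sum, tel (fun x => x), sub_zero]
    _ < ε := by rw [div_mul_eq_mul_div, div_lt_iff₀ (by positivity)]; nlinarith

/-- Powers larger than one are `o(x)`. -/
lemma cvy_rpow_small (θ K : ℝ) (hθ : 1 < θ) (hK : 0 ≤ K) :
    ∀ ε > 0, ∃ δ > 0, ∀ x, 0 ≤ x → x < δ → K * x ^ θ ≤ ε * x := by
  intro ε hε
  have hc : ContinuousAt (fun x : ℝ => x ^ (θ - 1)) 0 :=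
    Real.continuousAt_rpow_const _ _ (Or.inr (by linarith))
  obtain ⟨δ, hδ, H⟩ := Metric.continuousAt_iff.1 hc (ε / (K + 1)) (by positivity)
  refine ⟨δ, hδ, fun x hx hxd => ?_⟩
  have h1 := H (x := x) (by rw [Real.dist_eq, sub_zero, abs_of_nonneg hx]; exact hxd)
  rw [Real.zero_rpow (by linarith), Real.dist_eq, sub_zero, abs_of_nonneg (by positivity),
    lt_div_iff₀ (by positivity)] at h1
  have h2 : x ^ θ = x ^ (θ - 1) * x := by
    conv_lhs => rw [show θ = (θ - 1) + 1 by ring]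
    rw [Real.rpow_add_one' hx (by linarith)]
  have : 0 ≤ x ^ (θ - 1) := by positivity
  rw [h2, ← mul_assoc]
  exact mul_le_mul_of_nonneg_right (by nlinarith) hx

lemma cvy_dyadic (f g : ℝ → ℝ) (β γ Cf Cg T : ℝ) (hθ : 1 < β + γ) (hβ0 : 0 < β) (hγ0 : 0 < γ)
    (hCf : 0 ≤ Cf) (hCg : 0 ≤ Cg)
    (hf : ∀ x ∈ Set.Icc (0 : ℝ) T, ∀ y ∈ Set.Icc (0 : ℝ) T, |f x - f y| ≤ Cf * |x - y| ^ β)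
    (hg : ∀ x ∈ Set.Icc (0 : ℝ) T, ∀ y ∈ Set.Icc (0 : ℝ) T, |g x - g y| ≤ Cg * |x - y| ^ γ)
    (a b : ℝ) (ha : 0 ≤ a) (hab : a ≤ b) (hb : b ≤ T) (k : ℕ) :
    |∑ i ∈ Finset.range (2 ^ k), f (a + i * ((b - a) / 2 ^ k)) *
      (g (a + (i + 1 : ℕ) * ((b - a) / 2 ^ k)) - g (a + i * ((b - a) / 2 ^ k)))
      - f a * (g b - g a)| ≤ Cf * Cg * (1 - 2 ^ (1 - (β + γ)))⁻¹ * (b - a) ^ (β + γ) := by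
  set θ := β + γ with hθd
  set L := b - a with hL
  have hL0 : 0 ≤ L := by linarith
  set r : ℝ := 2 ^ (1 - θ) with hr
  have hr0 : 0 < r := by positivity
  have hr1 : r < 1 := Real.rpow_lt_one_of_one_lt_of_neg (by norm_num) (by linarith)
  set D : ℕ → ℝ := fun k => ∑ i ∈ Finset.range (2 ^ k), f (a + i * (L / 2 ^ k)) *
      (g (a + (i + 1 : ℕ) * (L / 2 ^ k)) - g (a + i * (L / 2 ^ k))) with hD
  have hD0 : D 0 = f a * (g b - g a) := by simp [hD, hL]
  have hstep : ∀ k, |D (k + 1) - D k| ≤ Cf * Cg * L ^ θ * r ^ k := by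
    intro k
    set q := L / 2 ^ (k + 1) with hq
    have hq0 : 0 ≤ q := by positivity
    have hqL : L / 2 ^ k = 2 * q := by rw [hq, pow_succ]; field_simp
    have hdouble : ∀ (F : ℕ → ℝ) (n : ℕ), ∑ i ∈ Finset.range (n * 2), F i =
        ∑ i ∈ Finset.range n, (F (2 * i) + F (2 * i + 1)) := by
      intro F n
      induction n with
      | zero => simp
      | succ n ih =>
        rw [Finset.sum_range_succ, ← ih, show (n + 1) * 2 = n * 2 + 1 + 1 by ring,
          Finset.sum_range_succ, Finset.sum_range_succ, mul_comm n 2, add_assoc]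
    have e : D (k + 1) - D k = ∑ i ∈ Finset.range (2 ^ k),
        (f (a + (2 * i + 1) * q) - f (a + 2 * i * q)) *
          (g (a + (2 * i + 2) * q) - g (a + (2 * i + 1) * q)) := by
      simp only [hD]
      rw [hqL, pow_succ, hdouble, ← Finset.sum_sub_distrib]
      refine Finset.sum_congr rfl fun i _ => ?_
      rw [← hq]
      push_cast
      rw [show (i : ℝ) * (2 * q) = 2 * i * q by ring,
        show ((i : ℝ) + 1) * (2 * q) = (2 * i + 2) * q by ring,
        show ((2 : ℝ) * i + 1 + 1) * q = (2 * i + 2) * q by ring]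
      ring
    rw [e]
    have hmem : ∀ i ∈ Finset.range (2 ^ k), ∀ c : ℝ, 0 ≤ c → c ≤ 2 →
        a + (2 * i + c) * q ∈ Set.Icc (0 : ℝ) T := by
      intro i hi c hc hc2
      have hi' : (i : ℝ) + 1 ≤ 2 ^ k := by exact_mod_cast Finset.mem_range.1 hi
      have hLq : L = 2 ^ k * (2 * q) := by rw [← hqL]; field_simp
      constructor
      · positivity
      · have : (2 * (i : ℝ) + c) * q ≤ (2 * 2 ^ k) * q :=
          mul_le_mul_of_nonneg_right (by linarith) hq0
        nlinarith
    calc _ ≤ ∑ i ∈ Finset.range (2 ^ k), Cf * Cg * q ^ θ := by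
          refine (Finset.abs_sum_le_sum_abs _ _).trans (Finset.sum_le_sum fun i hi => ?_)
          rw [abs_mul]
          have h0 := hmem i hi 0 le_rfl (by norm_num)
          rw [add_zero] at h0
          have h1 := hmem i hi 1 (by norm_num) (by norm_num)
          have h2 := hmem i hi 2 (by norm_num) le_rfl
          have b1 := hf _ h1 _ h0
          have b2 := hg _ h2 _ h1
          rw [show a + (2 * (i:ℝ) + 1) * q - (a + 2 * i * q) = q by ring, abs_of_nonneg hq0] at b1
          rw [show a + (2 * (i:ℝ) + 2) * q - (a + (2 * i + 1) * q) = q by ring,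
            abs_of_nonneg hq0] at b2
          calc _ ≤ (Cf * q ^ β) * (Cg * q ^ γ) :=
                mul_le_mul b1 b2 (abs_nonneg _) (by positivity)
            _ = _ := by rw [hθd, Real.rpow_add_of_nonneg hq0 hβ0.le hγ0.le]; ring
      _ = Cf * Cg * (2 ^ k * q ^ θ) := by simp; ring
      _ ≤ Cf * Cg * (L ^ θ * r ^ k) := by
          refine mul_le_mul_of_nonneg_left ?_ (by positivity)
          rw [hq, Real.div_rpow hL0 (by positivity)]
          have e1 : r ^ k * (2 ^ (k + 1) : ℝ) ^ θ = 2 ^ k * 2 ^ θ := by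
            rw [hr, ← Real.rpow_natCast, ← Real.rpow_natCast, ← Real.rpow_natCast,
              ← Real.rpow_mul (by norm_num), ← Real.rpow_mul (by norm_num),
              ← Real.rpow_add (by norm_num), ← Real.rpow_add (by norm_num)]
            congr 1; push_cast; ring
          have e2 : (1 : ℝ) ≤ 2 ^ θ := Real.one_le_rpow (by norm_num) (by linarith)
          have e3 : (0 : ℝ) < (2 ^ (k + 1) : ℝ) ^ θ := by positivity
          rw [← mul_div_assoc, div_le_iff₀ e3, mul_assoc, e1]
          have : 0 ≤ L ^ θ := by positivity
          have : 0 ≤ L ^ θ * 2 ^ k := by positivity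
          nlinarith
      _ = _ := by ring
  have hsum : |D k - D 0| ≤ ∑ j ∈ Finset.range k, Cf * Cg * L ^ θ * r ^ j := by
    rw [← Finset.sum_range_sub]
    exact (Finset.abs_sum_le_sum_abs _ _).trans (Finset.sum_le_sum fun i _ => hstep i)
  rw [← hD0]
  refine hsum.trans ?_
  rw [← Finset.mul_sum]
  have hgeo : ∑ j ∈ Finset.range k, r ^ j ≤ (1 - r)⁻¹ := by
    rw [← tsum_geometric_of_lt_one hr0.le hr1]
    exact (summable_geometric_of_lt_one hr0.le hr1).sum_le_tsum _ (fun i _ => by positivity)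
  calc _ ≤ Cf * Cg * L ^ θ * (1 - r)⁻¹ := mul_le_mul_of_nonneg_left hgeo (by positivity)
    _ = _ := by ring

/-- Young–Loève estimate. -/
lemma cvy_young (f g : ℝ → ℝ) (β γ Cf Cg T : ℝ) (hθ : 1 < β + γ) (hβ0 : 0 < β) (hγ0 : 0 < γ)
    (hCf : 0 ≤ Cf) (hCg : 0 ≤ Cg)
    (hf : ∀ x ∈ Set.Icc (0 : ℝ) T, ∀ y ∈ Set.Icc (0 : ℝ) T, |f x - f y| ≤ Cf * |x - y| ^ β)
    (hg : ∀ x ∈ Set.Icc (0 : ℝ) T, ∀ y ∈ Set.Icc (0 : ℝ) T, |g x - g y| ≤ Cg * |x - y| ^ γ)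
    (a b Ia Ib : ℝ) (ha : 0 ≤ a) (hab : a ≤ b) (hb : b ≤ T)
    (hIa : IsRSIntegral f g 0 a Ia) (hIb : IsRSIntegral f g 0 b Ib) :
    |Ib - Ia - f a * (g b - g a)| ≤
      Cf * Cg * (1 - 2 ^ (1 - (β + γ)))⁻¹ * (b - a) ^ (β + γ) := by
  refine le_of_forall_pos_le_add fun ε hε => ?_
  obtain ⟨d1, hd1, H1⟩ := cvy_rs_nat hIa (ε / 2) (by positivity)
  obtain ⟨d2, hd2, H2⟩ := cvy_rs_nat hIb (ε / 2) (by positivity)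
  have hd : 0 < min d1 d2 := lt_min hd1 hd2
  obtain ⟨k, hk⟩ := pow_unbounded_of_one_lt (b / min d1 d2) (one_lt_two (α := ℝ))
  have hkb : b / 2 ^ k < min d1 d2 := by
    rw [div_lt_iff₀ hd] at hk; rw [div_lt_iff₀ (by positivity)]; linarith
  have h2k : (0 : ℝ) < 2 ^ k := by positivity
  have hak : a / 2 ^ k ≤ b / 2 ^ k := by gcongr
  have hak0 : 0 ≤ a / 2 ^ k := by positivity
  have hLk : (b - a) / 2 ^ k ≤ b / 2 ^ k := by gcongr; linarith
  have hLk0 : 0 ≤ (b - a) / 2 ^ k := div_nonneg (by linarith) h2k.le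
  have hB := cvy_dyadic f g β γ Cf Cg T hθ hβ0 hγ0 hCf hCg hf hg a b ha hab hb k
  have A1 := H1 (2 ^ k) (fun i => i * (a / 2 ^ k))
    (fun i j hij => mul_le_mul_of_nonneg_right (by exact_mod_cast hij) hak0) (by simp)
    (by push_cast; field_simp) (fun i _ => by
      have := min_le_left d1 d2
      push_cast; linarith)
  set p : ℕ → ℝ := fun i => ((min i (2 ^ k) : ℕ) : ℝ) * (a / 2 ^ k) +
    ((i - 2 ^ k : ℕ) : ℝ) * ((b - a) / 2 ^ k) with hp
  have pl : ∀ i ≤ 2 ^ k, p i = i * (a / 2 ^ k) := by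
    intro i hi
    simp only [hp]
    rw [min_eq_left hi, Nat.sub_eq_zero_of_le hi]; simp
  have pr : ∀ i, p (2 ^ k + i) = a + i * ((b - a) / 2 ^ k) := by
    intro i
    simp only [hp]
    rw [min_eq_right (by omega), Nat.add_sub_cancel_left]
    push_cast
    rw [mul_div_cancel₀ _ h2k.ne']
  have A2 := H2 (2 ^ k + 2 ^ k) p
    (by
      intro i j hij
      simp only [hp]
      gcongr) (by rw [pl 0 (by positivity)]; simp) (by rw [pr]; push_cast; field_simp; ring)
    (fun i _ => by
      have := min_le_right d1 d2
      rcases lt_or_ge i (2 ^ k) with h | h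
      · rw [pl i h.le, pl (i + 1) h]; push_cast; linarith
      · obtain ⟨j, rfl⟩ := Nat.exists_eq_add_of_le h
        rw [add_assoc, pr, pr]; push_cast; linarith)
  rw [Finset.sum_range_add] at A2
  have s1 : ∑ i ∈ Finset.range (2 ^ k), f (p i) * (g (p (i + 1)) - g (p i)) =
      ∑ i ∈ Finset.range (2 ^ k), f (i * (a / 2 ^ k)) *
        (g ((i + 1 : ℕ) * (a / 2 ^ k)) - g (i * (a / 2 ^ k))) := by
    refine Finset.sum_congr rfl fun i hi => ?_
    have := Finset.mem_range.1 hi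
    rw [pl i this.le, pl (i + 1) this]
  have s2 : ∑ i ∈ Finset.range (2 ^ k), f (p (2 ^ k + i)) * (g (p (2 ^ k + i + 1)) - g (p (2 ^ k + i))) =
      ∑ i ∈ Finset.range (2 ^ k), f (a + i * ((b - a) / 2 ^ k)) *
      (g (a + (i + 1 : ℕ) * ((b - a) / 2 ^ k)) - g (a + i * ((b - a) / 2 ^ k))) := by
    refine Finset.sum_congr rfl fun i hi => ?_
    rw [add_assoc, pr, pr]
  rw [s1, s2] at A2
  rw [abs_lt] at A1 A2
  rw [abs_le] at hB ⊢
  constructor <;> linarith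

/-- Change of variables formula (deterministic Itô formula) for Young
integrals: if `η(t) = η(0) + ∫₀ᵗ e ds + ∫₀ᵗ f dg` with `f ∈ C^β`, `g ∈ C^γ`,
`1/2 < γ < 1`, `β > 1 − γ`, then `v(t) = u(t, η(t))` satisfies
`v(t) − v(0) = ∫₀ᵗ (u_t(s,η(s)) + u_x(s,η(s)) e(s)) ds + ∫₀ᵗ u_x(s,η(s)) f(s) dg(s)`,
with no second-order correction term. -/
theorem change_of_variables_young
    (u ut ux uxx : ℝ → ℝ → ℝ) (e f g η : ℝ → ℝ) (β γ Cf Cg T M : ℝ)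
    (hγ : 1 / 2 < γ) (hγ1 : γ < 1) (hβ : 1 - γ < β) (hβ1 : β ≤ 1) (hT : 0 < T)
    (hf : ∀ x ∈ Icc (0 : ℝ) T, ∀ y ∈ Icc (0 : ℝ) T, |f x - f y| ≤ Cf * |x - y| ^ β)
    (hg : ∀ x ∈ Icc (0 : ℝ) T, ∀ y ∈ Icc (0 : ℝ) T, |g x - g y| ≤ Cg * |x - y| ^ γ)
    (he : ContinuousOn e (Icc 0 T))
    (hut : ∀ t x : ℝ, HasDerivAt (fun s => u s x) (ut t x) t)
    (hutc : Continuous fun p : ℝ × ℝ => ut p.1 p.2)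
    (hux : ∀ t x : ℝ, HasDerivAt (fun y => u t y) (ux t x) x)
    (huxx : ∀ t x : ℝ, HasDerivAt (fun y => ux t y) (uxx t x) x)
    (huxxM : ∀ t x : ℝ, |uxx t x| ≤ M)
    (hη : ∀ t ∈ Icc (0 : ℝ) T, ∃ I : ℝ,
      IsRSIntegral f g 0 t I ∧ η t = η 0 + (∫ s in (0 : ℝ)..t, e s) + I) :
    ∀ t ∈ Icc (0 : ℝ) T, ∃ J : ℝ,
      IsRSIntegral (fun s => ux s (η s) * f s) g 0 t J ∧
      u t (η t) - u 0 (η 0) =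
        (∫ s in (0 : ℝ)..t, (ut s (η s) + ux s (η s) * e s)) + J := by
  have hM0 : 0 ≤ M := (abs_nonneg _).trans (huxxM 0 0)
  have hβ0 : 0 < β := by linarith
  have hγ0 : 0 < γ := by linarith
  have hθ : 1 < β + γ := by linarith
  have h0T : (0 : ℝ) ∈ Set.Icc 0 T := ⟨le_rfl, hT.le⟩
  have hTT : T ∈ Set.Icc 0 T := ⟨hT.le, le_rfl⟩
  have hCf : 0 ≤ Cf := by
    have := (abs_nonneg _).trans (hf T hTT 0 h0T)
    exact nonneg_of_mul_nonneg_left this (by rw [sub_zero, abs_of_pos hT]; positivity)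
  have hCg : 0 ≤ Cg := by
    have := (abs_nonneg _).trans (hg T hTT 0 h0T)
    exact nonneg_of_mul_nonneg_left this (by rw [sub_zero, abs_of_pos hT]; positivity)
  have huxc := cvy_ux_cont u ut ux uxx M hut hux huxx huxxM
  -- increments of η
  obtain ⟨C, hC0, hY⟩ : ∃ C, 0 ≤ C ∧ ∀ a b, 0 ≤ a → a ≤ b → b ≤ T →
      |η b - η a - (∫ s in a..b, e s) - f a * (g b - g a)| ≤ C * (b - a) ^ (β + γ) := by
    refine ⟨Cf * Cg * (1 - 2 ^ (1 - (β + γ)))⁻¹, ?_, ?_⟩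
    · have : (2 : ℝ) ^ (1 - (β + γ)) < 1 :=
        Real.rpow_lt_one_of_one_lt_of_neg (by norm_num) (by linarith)
      have : 0 ≤ (1 - (2 : ℝ) ^ (1 - (β + γ)))⁻¹ := inv_nonneg.2 (by linarith)
      positivity
    · intro a b ha hab hb
      obtain ⟨Ia, hIa, ea⟩ := hη a ⟨ha, hab.trans hb⟩
      obtain ⟨Ib, hIb, eb⟩ := hη b ⟨ha.trans hab, hb⟩
      have := cvy_young f g β γ Cf Cg T hθ hβ0 hγ0 hCf hCg hf hg a b Ia Ib ha hab hb hIa hIb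
      have i1 : IntervalIntegrable e MeasureTheory.volume 0 a :=
        (he.mono (by rw [Set.uIcc_of_le ha]; exact Set.Icc_subset_Icc le_rfl (hab.trans hb))
          ).intervalIntegrable
      have i2 : IntervalIntegrable e MeasureTheory.volume 0 b :=
        (he.mono (by
          rw [Set.uIcc_of_le (ha.trans hab)]; exact Set.Icc_subset_Icc le_rfl hb)
          ).intervalIntegrable
      rw [← intervalIntegral.integral_interval_sub_left i2 i1, eb, ea]
      convert this using 2
      ring
  obtain ⟨E, hE⟩ := isCompact_Icc.exists_bound_of_continuousOn he
  have hE0 : 0 ≤ E := (norm_nonneg _).trans (hE 0 h0T)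
  obtain ⟨B, hB0, hfB⟩ : ∃ B, 0 ≤ B ∧ ∀ x ∈ Set.Icc 0 T, |f x| ≤ B := by
    refine ⟨|f 0| + Cf * T ^ β, by positivity, fun x hx => ?_⟩
    have h1 := hf x hx 0 h0T
    rw [sub_zero, abs_of_nonneg hx.1] at h1
    have h2 : Cf * x ^ β ≤ Cf * T ^ β :=
      mul_le_mul_of_nonneg_left (Real.rpow_le_rpow hx.1 hx.2 hβ0.le) hCf
    have h3 := abs_sub_abs_le_abs_sub (f x) (f 0)
    linarith
  obtain ⟨K, hK0, hK⟩ : ∃ K, 0 ≤ K ∧ ∀ a b, 0 ≤ a → a ≤ b → b ≤ T →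
      |η b - η a| ≤ K * (b - a) ^ γ := by
    refine ⟨C * T ^ β + E * T ^ (1 - γ) + B * Cg, by positivity, fun a b ha hab hb => ?_⟩
    have hd : 0 ≤ b - a := by linarith
    have hdT : b - a ≤ T := by linarith
    have h1 := hY a b ha hab hb
    have hgγ : 0 ≤ (b - a) ^ γ := by positivity
    have h2 : (b - a) ^ (β + γ) ≤ T ^ β * (b - a) ^ γ := by
      rw [Real.rpow_add_of_nonneg hd hβ0.le hγ0.le]
      exact mul_le_mul_of_nonneg_right (Real.rpow_le_rpow hd hdT hβ0.le) hgγ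
    have h3 : |∫ s in a..b, e s| ≤ E * (b - a) := by
      have := intervalIntegral.norm_integral_le_of_norm_le_const (a := a) (b := b) (f := e)
        (C := E) (fun x hx => by
          rw [Set.uIoc_of_le hab] at hx
          exact hE x ⟨ha.trans hx.1.le, hx.2.trans hb⟩)
      rwa [abs_of_nonneg hd] at this
    have h4 : b - a ≤ T ^ (1 - γ) * (b - a) ^ γ := by
      have : b - a = (b - a) ^ (1 - γ) * (b - a) ^ γ := by
        rw [← Real.rpow_add_of_nonneg hd (by linarith) hγ0.le]; simp
      conv_lhs => rw [this]
      exact mul_le_mul_of_nonneg_right (Real.rpow_le_rpow hd hdT (by linarith)) hgγ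
    have h5 : |f a * (g b - g a)| ≤ B * (Cg * (b - a) ^ γ) := by
      rw [abs_mul]
      have := hg b ⟨ha.trans hab, hb⟩ a ⟨ha, hab.trans hb⟩
      rw [abs_of_nonneg hd] at this
      exact mul_le_mul (hfB a ⟨ha, hab.trans hb⟩) this (abs_nonneg _) hB0
    have h6 := mul_le_mul_of_nonneg_left h2 hC0
    have h7 := mul_le_mul_of_nonneg_left h4 hE0
    rw [abs_le] at *
    constructor <;> nlinarith
  have hηc : ContinuousOn η (Set.Icc 0 T) := by
    intro x hx
    rw [Metric.continuousWithinAt_iff]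
    intro ε hε
    have hc : ContinuousAt (fun x : ℝ => x ^ γ) 0 :=
      Real.continuousAt_rpow_const _ _ (Or.inr hγ0.le)
    obtain ⟨δ, hδ, H⟩ := Metric.continuousAt_iff.1 hc (ε / (K + 1)) (by positivity)
    refine ⟨δ, hδ, fun {y} hy hxy => ?_⟩
    have h1 : |η y - η x| ≤ K * |y - x| ^ γ := by
      rcases le_total x y with h | h
      · rw [abs_of_nonneg (sub_nonneg.2 h)]; exact hK x y hx.1 h hy.2
      · rw [abs_sub_comm, abs_sub_comm y x, abs_of_nonneg (sub_nonneg.2 h)]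
        exact hK y x hy.1 h hx.2
    have h2 := H (x := |y - x|) (by
      rw [Real.dist_eq, sub_zero, abs_abs, ← Real.dist_eq]; exact hxy)
    rw [Real.zero_rpow hγ0.ne', Real.dist_eq, sub_zero, abs_of_nonneg (by positivity),
      lt_div_iff₀ (by positivity)] at h2
    rw [Real.dist_eq]
    have : 0 ≤ |y - x| ^ γ := by positivity
    nlinarith
  -- continuity of the coefficients along η
  have huxη : ContinuousOn (fun s => ux s (η s)) (Set.Icc 0 T) :=
    huxc.comp_continuousOn (continuousOn_id.prodMk hηc)
  have hutη : ContinuousOn (fun s => ut s (η s)) (Set.Icc 0 T) :=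
    hutc.comp_continuousOn (continuousOn_id.prodMk hηc)
  have hut2 : ContinuousOn (fun q : ℝ × ℝ => ut q.1 (η q.2)) (Set.Icc 0 T ×ˢ Set.Icc 0 T) :=
    hutc.comp_continuousOn (continuousOn_fst.prodMk
      (hηc.comp continuousOn_snd (fun q hq => hq.2)))
  obtain ⟨U, hU⟩ := isCompact_Icc.exists_bound_of_continuousOn huxη
  have hU0 : 0 ≤ U := (norm_nonneg _).trans (hU 0 h0T)
  have huc1 := Metric.uniformContinuousOn_iff.1
    (isCompact_Icc.uniformContinuousOn_of_continuous huxη)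
  have huc2 := Metric.uniformContinuousOn_iff.1
    ((isCompact_Icc.prod isCompact_Icc).uniformContinuousOn_of_continuous hut2)
  have hhc : ContinuousOn (fun s => ut s (η s) + ux s (η s) * e s) (Set.Icc 0 T) :=
    hutη.add (huxη.mul he)
  have sub : ∀ a b, 0 ≤ a → a ≤ b → b ≤ T → Set.uIcc a b ⊆ Set.Icc 0 T := by
    intro a b ha hab hb
    rw [Set.uIcc_of_le hab]; exact Set.Icc_subset_Icc ha hb
  intro τ hτ
  have := cvy_sew (fun s => ux s (η s) * f s) g
    (fun s => u s (η s) - ∫ r in (0 : ℝ)..s, (ut r (η r) + ux r (η r) * e r)) τ hτ.1 ?_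
  · refine ⟨_, this, ?_⟩
    simp only [intervalIntegral.integral_same]
    ring
  intro ε hε
  obtain ⟨d1, hd1, H1⟩ := huc1 (ε / 4 / (E + 1)) (by positivity)
  obtain ⟨d2, hd2, H2⟩ := huc2 (ε / 4) (by positivity)
  obtain ⟨d3, hd3, H3⟩ := cvy_rpow_small (β + γ) (U * C) hθ (by positivity) (ε / 4) (by positivity)
  obtain ⟨d4, hd4, H4⟩ := cvy_rpow_small (γ + γ) (M * K ^ 2) (by linarith) (by positivity)
    (ε / 4) (by positivity)
  refine ⟨min (min d1 d2) (min d3 d4), by positivity, fun a b ha hab hbτ hδ => ?_⟩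
  have hb : b ≤ T := hbτ.trans hτ.2
  have hd : 0 ≤ b - a := by linarith
  simp only [lt_min_iff] at hδ
  obtain ⟨⟨hδ1, hδ2⟩, hδ3, hδ4⟩ := hδ
  have haI : a ∈ Set.Icc 0 T := ⟨ha, hab.trans hb⟩
  have hbI : b ∈ Set.Icc 0 T := ⟨ha.trans hab, hb⟩
  have hsub := sub a b ha hab hb
  have ie := (he.mono hsub).intervalIntegrable (μ := MeasureTheory.volume)
  have iut := (hutη.mono hsub).intervalIntegrable (μ := MeasureTheory.volume)
  have iuxe : IntervalIntegrable (fun s => ux s (η s) * e s) MeasureTheory.volume a b :=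
    ((huxη.mul he).mono hsub).intervalIntegrable
  have iutb : IntervalIntegrable (fun s => ut s (η b)) MeasureTheory.volume a b :=
    (hutc.comp (continuous_id.prodMk continuous_const)).intervalIntegrable a b
  -- term 1
  have T1 : |u b (η b) - u a (η b) - ∫ s in a..b, ut s (η s)| ≤ ε / 4 * (b - a) := by
    rw [← intervalIntegral.integral_eq_sub_of_hasDerivAt (f := fun s => u s (η b))
      (fun s _ => hut s (η b)) iutb, ← intervalIntegral.integral_sub iutb iut]
    have := intervalIntegral.norm_integral_le_of_norm_le_const (a := a) (b := b)
      (f := fun s => ut s (η b) - ut s (η s)) (C := ε / 4) (fun s hs => by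
        rw [Set.uIoc_of_le hab] at hs
        have hsI : s ∈ Set.Icc 0 T := ⟨ha.trans hs.1.le, hs.2.trans hb⟩
        have := H2 (s, b) ⟨hsI, hbI⟩ (s, s) ⟨hsI, hsI⟩ (by
          rw [Prod.dist_eq]
          simp only [dist_self, Real.dist_eq]
          rw [max_lt_iff, abs_of_nonneg (by linarith [hs.2])]
          exact ⟨hd2, by linarith [hs.1]⟩)
        exact this.le)
    rwa [abs_of_nonneg hd] at this
  -- term 2
  have T2 : |u a (η b) - u a (η a) - ux a (η a) * (η b - η a)| ≤ ε / 4 * (b - a) := by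
    refine (cvy_taylor _ _ _ M (hux a) (huxx a) (huxxM a) (η a) (η b)).trans ?_
    refine le_trans ?_ (H4 _ hd hδ4)
    rw [Real.rpow_add_of_nonneg hd hγ0.le hγ0.le, mul_assoc]
    refine mul_le_mul_of_nonneg_left ?_ hM0
    calc |η b - η a| ^ 2 ≤ (K * (b - a) ^ γ) ^ 2 :=
          pow_le_pow_left₀ (abs_nonneg _) (hK a b ha hab hb) 2
      _ = _ := by ring
  -- term 3
  have T3 : |ux a (η a) * (η b - η a - (∫ s in a..b, e s) - f a * (g b - g a))|
      ≤ ε / 4 * (b - a) := by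
    refine le_trans ?_ (H3 _ hd hδ3)
    rw [abs_mul, mul_assoc]
    exact mul_le_mul (hU a haI) (hY a b ha hab hb) (abs_nonneg _) hU0
  -- term 4
  have T4 : |ux a (η a) * (∫ s in a..b, e s) - ∫ s in a..b, ux s (η s) * e s|
      ≤ ε / 4 * (b - a) := by
    rw [← intervalIntegral.integral_const_mul,
      ← intervalIntegral.integral_sub (ie.const_mul _) iuxe]
    have := intervalIntegral.norm_integral_le_of_norm_le_const (a := a) (b := b)
      (f := fun s => ux a (η a) * e s - ux s (η s) * e s) (C := ε / 4) (fun s hs => by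
        rw [Set.uIoc_of_le hab] at hs
        have hsI : s ∈ Set.Icc 0 T := ⟨ha.trans hs.1.le, hs.2.trans hb⟩
        have h1 := H1 a haI s hsI (by
          rw [Real.dist_eq, abs_sub_comm, abs_of_nonneg (by linarith [hs.1])]
          linarith [hs.2])
        rw [← sub_mul, norm_mul]
        rw [dist_eq_norm] at h1
        calc _ ≤ ε / 4 / (E + 1) * E := mul_le_mul h1.le (hE s hsI) (norm_nonneg _) (by positivity)
          _ ≤ ε / 4 / (E + 1) * (E + 1) := by gcongr; linarith
          _ = ε / 4 := by field_simp)
    rwa [abs_of_nonneg hd] at this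
  have hI : (∫ r in (0 : ℝ)..b, (ut r (η r) + ux r (η r) * e r)) -
      (∫ r in (0 : ℝ)..a, (ut r (η r) + ux r (η r) * e r)) =
      (∫ s in a..b, ut s (η s)) + ∫ s in a..b, ux s (η s) * e s := by
    rw [intervalIntegral.integral_interval_sub_left
      ((hhc.mono (sub 0 b le_rfl (ha.trans hab) hb)).intervalIntegrable)
      ((hhc.mono (sub 0 a le_rfl ha (hab.trans hb))).intervalIntegrable)]
    exact intervalIntegral.integral_add iut iuxe
  rw [abs_le] at T1 T2 T3 T4 ⊢
  constructor <;> nlinarith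
end
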